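/- arXiv:2105.09732 — 2 statements merged into one kernel-verified Lean document; each statement's English description precedes it below -/
import Mathlib

section
/- With X = {0,1}^ℤ, shift σ, Bernoulli measure μ_λ of parameter λ, and roof function f(u) = g(k_u) with k g(k) → l ∈ (0,∞), the entropy of the induced suspension-flow measure ν_{μ_λ} satisfies h(ν_{μ_λ}) = h(μ_λ)/∫f dμ_λ → 1/(2l) as λ → 0. -/
open MeasureTheory Filter Topology
open scoped ENNReal

/-- Shannon entropy of a measure on a finite space. -/
noncomputable def shannonEnt {β : Type*} [Fintype β] [MeasurableSpace β] (ν : Measure β) : ℝ :=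
  ∑ b : β, Real.negMulLog (ν {b}).toReal

/-- Dynamical entropy of `(S,μ)` with respect to the finite observable `P`. -/
noncomputable def obsEntropy {α : Type*} [MeasurableSpace α] (S : α → α) (μ : Measure α)
    {m : ℕ} (P : α → Fin m) : ℝ≥0∞ :=
  Filter.liminf (fun n : ℕ =>
    ENNReal.ofReal (shannonEnt (μ.map fun x => fun i : Fin n => P (S^[(i : ℕ)] x)) / n))
    Filter.atTop

/-- Kolmogorov–Sinai (measure-theoretic) entropy of `(S,μ)`. -/
noncomputable def kolSinai {α : Type*} [MeasurableSpace α] (S : α → α) (μ : Measure α) : ℝ≥0∞ :=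
  ⨆ (m : ℕ) (P : α → Fin m) (_ : Measurable P), obsEntropy S μ P

/-- The relation generating the suspension space: `(x,s) ~ (Tx, s - f x)`. -/
def suspRel {X : Type*} (T : X → X) (f : X → ℝ) : X × ℝ → X × ℝ → Prop :=
  fun p q => q = (T p.1, p.2 - f p.1)

/-- The suspension space `X^f` over `T` with roof function `f`. -/
abbrev SuspSpace {X : Type*} (T : X → X) (f : X → ℝ) := Quot (suspRel T f)

/-- The suspension flow `T^f_t`, induced by translation in the second coordinate. -/
def suspFlow {X : Type*} (T : X → X) (f : X → ℝ) (t : ℝ) :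
    SuspSpace T f → SuspSpace T f :=
  Quot.map (fun p => (p.1, p.2 + t)) (by
    intro a b h
    simp only [suspRel] at h ⊢
    subst h
    show ((T a.1, a.2 - f a.1 + t) : X × ℝ) = (T a.1, a.2 + t - f a.1)
    rw [sub_add_eq_add_sub])

/-- The measure `Θ(μ) = (μ × Leb)|_{X^f} / ∫ f dμ` on the suspension space. -/
noncomputable def suspMeasure {X : Type*} [MeasurableSpace X] (T : X → X) (f : X → ℝ)
    (μ : Measure X) : Measure (SuspSpace T f) :=
  (ENNReal.ofReal (∫ x, f x ∂μ))⁻¹ •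
    (((μ.prod volume).restrict {p : X × ℝ | 0 ≤ p.2 ∧ p.2 < f p.1}).map
      (Quot.mk (suspRel T f)))

/-- The full shift space `{0,1}^ℤ`. -/
abbrev BSeq := ℤ → Bool

/-- The zero sequence `0^∞`. -/
def zeroSeq : BSeq := fun _ => false

/-- The shift `σ`. -/
def shiftMap : BSeq → BSeq := fun u n => u (n + 1)

/-- `k_u = min {|n| : u_n = 1}`. -/
noncomputable def kabs (u : BSeq) : ℕ := sInf {m : ℕ | ∃ n : ℤ, n.natAbs = m ∧ u n = true}

open Classical in
/-- The roof function `f(u) = g(k_u)`, `f(0^∞) = 0`. -/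
noncomputable def fRoof (g : ℕ → ℝ) (u : BSeq) : ℝ := if u = zeroSeq then 0 else g (kabs u)

section EntropyCounting

lemma negMulLog_le_one_sub {x : ℝ} (hx : 0 ≤ x) : Real.negMulLog x ≤ 1 - x := by
  rcases hx.eq_or_lt with rfl | hx
  · simp
  · have h := Real.one_sub_inv_le_log_of_pos hx
    have := mul_le_mul_of_nonneg_left h hx.le
    rw [mul_sub, mul_inv_cancel₀ hx.ne'] at this
    rw [Real.negMulLog]
    linarith

lemma sum_negMulLog_le {β : Type*} (J : Finset β) (a : β → ℝ) (ha : ∀ b, 0 ≤ a b) :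
    ∑ b ∈ J, Real.negMulLog (a b)
      ≤ (∑ b ∈ J, a b) * Real.log J.card + Real.negMulLog (∑ b ∈ J, a b) := by
  rcases J.eq_empty_or_nonempty with rfl | hJ
  · simp
  have hc : (0 : ℝ) < J.card := by exact_mod_cast hJ.card_pos
  have h := Real.concaveOn_negMulLog.le_map_sum (t := J) (w := fun _ => (J.card : ℝ)⁻¹)
    (p := a) (fun _ _ => by positivity) (by simp [hc.ne']) (fun b _ => ha b)
  simp only [smul_eq_mul, ← Finset.mul_sum] at h
  rw [Real.negMulLog_mul] at h
  have h2 : Real.negMulLog (J.card : ℝ)⁻¹ = (J.card : ℝ)⁻¹ * Real.log J.card := by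
    rw [Real.negMulLog, Real.log_inv]; ring
  rw [h2] at h
  have h3 := mul_le_mul_of_nonneg_left h hc.le
  rw [mul_inv_cancel_left₀ hc.ne'] at h3
  refine h3.trans (le_of_eq ?_)
  field_simp

lemma sum_measureReal_fiber {Ω β : Type*} [Fintype β] [MeasurableSpace Ω] [MeasurableSpace β]
    [MeasurableSingletonClass β] (ν : Measure Ω) [IsProbabilityMeasure ν] {F : Ω → β}
    (hF : Measurable F) : ∑ b, ((ν.map F) {b}).toReal = 1 := by
  have : IsProbabilityMeasure (ν.map F) := Measure.isProbabilityMeasure_map hF.aemeasurable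
  have := sum_measureReal_singleton (μ := ν.map F) Finset.univ
  simpa [measureReal_def] using this

/-- Entropy is at most the logarithm of the number of values taken on a large set, up to the
contribution of the complement. -/
lemma shannonEnt_map_le {Ω β : Type*} [Fintype β] [MeasurableSpace Ω] [MeasurableSpace β]
    [MeasurableSingletonClass β] (ν : Measure Ω) [IsProbabilityMeasure ν] {F : Ω → β}
    (hF : Measurable F) (G : Set Ω) (J : Finset β) (hJ : ∀ z ∈ G, F z ∈ J) {η : ℝ}
    (hη : 0 ≤ η) (hG : ν Gᶜ ≤ ENNReal.ofReal η) {X : ℝ} (hX : 0 ≤ X) (hJX : Real.log J.card ≤ X) :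
    shannonEnt (ν.map F) ≤ X + η * Real.log (Fintype.card β) + 1 := by
  classical
  have : IsProbabilityMeasure (ν.map F) := Measure.isProbabilityMeasure_map hF.aemeasurable
  set a : β → ℝ := fun b => ((ν.map F) {b}).toReal with hadef
  have ha : ∀ b, 0 ≤ a b := fun b => ENNReal.toReal_nonneg
  have hsum : ∑ b, a b = 1 := sum_measureReal_fiber ν hF
  have hsplit : ∑ b ∈ J, a b + ∑ b ∈ Jᶜ, a b = 1 := by rw [Finset.sum_add_sum_compl, hsum]
  have h1 := sum_negMulLog_le J a ha
  have h2 := sum_negMulLog_le Jᶜ a ha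
  have hJ0 : 0 ≤ ∑ b ∈ J, a b := Finset.sum_nonneg fun b _ => ha b
  have hJc0 : 0 ≤ ∑ b ∈ Jᶜ, a b := Finset.sum_nonneg fun b _ => ha b
  have hJc : ∑ b ∈ Jᶜ, a b ≤ η := by
    have e : ∑ b ∈ Jᶜ, a b = ((ν.map F) (Jᶜ : Finset β)).toReal := by
      have := sum_measureReal_singleton (μ := ν.map F) Jᶜ
      simpa [measureReal_def] using this
    rw [e]
    refine ENNReal.toReal_le_of_le_ofReal hη (le_trans ?_ hG)
    rw [Measure.map_apply hF (Finset.measurableSet _)]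
    refine measure_mono fun z hz hzG => ?_
    have := hJ z hzG
    simp_all
  have h3 := negMulLog_le_one_sub hJ0
  have h4 := negMulLog_le_one_sub hJc0
  have hlog : Real.log (Jᶜ.card) ≤ Real.log (Fintype.card β) := by
    rcases Nat.eq_zero_or_pos Jᶜ.card with h | h
    · rw [h]; simp only [Nat.cast_zero, Real.log_zero]; exact Real.log_natCast_nonneg _
    · exact Real.log_le_log (by exact_mod_cast h) (by exact_mod_cast Finset.card_le_univ _)
  have hl0 : 0 ≤ Real.log (Fintype.card β) := Real.log_natCast_nonneg _
  have hent : shannonEnt (ν.map F) = ∑ b ∈ J, Real.negMulLog (a b)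
      + ∑ b ∈ Jᶜ, Real.negMulLog (a b) := by
    rw [Finset.sum_add_sum_compl]; rfl
  have h5 : (∑ b ∈ J, a b) * Real.log J.card ≤ X :=
    calc _ ≤ (∑ b ∈ J, a b) * X := by gcongr
      _ ≤ 1 * X := by gcongr; linarith
      _ = X := one_mul X
  have h6 : (∑ b ∈ Jᶜ, a b) * Real.log Jᶜ.card ≤ η * Real.log (Fintype.card β) := by
    calc _ ≤ (∑ b ∈ Jᶜ, a b) * Real.log (Fintype.card β) := by gcongr
      _ ≤ _ := by gcongr
  linarith

/-- Entropy is large when, on a large set, all fibres are small. -/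
lemma le_shannonEnt_map {Ω β : Type*} [Fintype β] [MeasurableSpace Ω] [MeasurableSpace β]
    [MeasurableSingletonClass β] (ν : Measure Ω) [IsProbabilityMeasure ν] {F : Ω → β}
    (hF : Measurable F) (G : Set Ω) {η : ℝ} (hη : 0 < η)
    (hG : ν Gᶜ ≤ ENNReal.ofReal η) {b : ℝ} (hb : 0 < b) (hbη : b ≤ η)
    (hfib : ∀ v, ν (F ⁻¹' {v} ∩ G) ≤ ENNReal.ofReal b) :
    (1 - 2 * η) * Real.log (η / b) ≤ shannonEnt (ν.map F) := by
  classical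
  have : IsProbabilityMeasure (ν.map F) := Measure.isProbabilityMeasure_map hF.aemeasurable
  set a : β → ℝ := fun v => ((ν.map F) {v}).toReal with hadef
  have ha : ∀ v, 0 ≤ a v := fun v => ENNReal.toReal_nonneg
  have hsum : ∑ v, a v = 1 := sum_measureReal_fiber ν hF
  have ha1 : ∀ v, a v ≤ 1 := fun v => by
    rw [← hsum]; exact Finset.single_le_sum (fun v _ => ha v) (Finset.mem_univ v)
  set c : β → ℝ := fun v => (ν (F ⁻¹' {v} ∩ G)).toReal with hcdef
  have hcb : ∀ v, c v ≤ b := fun v => ENNReal.toReal_le_of_le_ofReal hb.le (hfib v)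
  have hca : ∀ v, c v ≤ a v := fun v => by
    simp only [hcdef, hadef]
    rw [Measure.map_apply hF (measurableSet_singleton v)]
    exact ENNReal.toReal_mono (measure_ne_top _ _) (measure_mono Set.inter_subset_left)
  have hc0 : ∀ v, 0 ≤ c v := fun v => ENNReal.toReal_nonneg
  have hcs : 1 - η ≤ ∑ v, c v := by
    have h1 : (1 : ℝ≥0∞) ≤ ∑ v, ν (F ⁻¹' {v} ∩ G) + ENNReal.ofReal η := by
      calc (1 : ℝ≥0∞) = ν Set.univ := by simp
        _ ≤ ν ((⋃ v, (F ⁻¹' {v} ∩ G)) ∪ Gᶜ) := by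
            refine measure_mono fun z _ => ?_
            by_cases hz : z ∈ G
            · exact Or.inl (Set.mem_iUnion.2 ⟨F z, rfl, hz⟩)
            · exact Or.inr hz
        _ ≤ ν (⋃ v, (F ⁻¹' {v} ∩ G)) + ν Gᶜ := measure_union_le _ _
        _ ≤ _ := add_le_add (measure_iUnion_fintype_le _ _) hG
    have h2 := ENNReal.toReal_mono (by simp [ENNReal.sum_eq_top]) h1
    rw [ENNReal.toReal_add (by simp [ENNReal.sum_eq_top]) (by simp),
      ENNReal.toReal_sum (by simp), ENNReal.toReal_ofReal hη.le] at h2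
    simp only [ENNReal.toReal_one] at h2
    linarith
  set J : Finset β := Finset.univ.filter fun v => a v ≤ b / η with hJdef
  have hJc : ∑ v ∈ Jᶜ, c v ≤ η := by
    have h1 : (Jᶜ.card : ℝ) * (b / η) ≤ 1 := by
      calc (Jᶜ.card : ℝ) * (b / η) = ∑ v ∈ Jᶜ, b / η := by simp
        _ ≤ ∑ v ∈ Jᶜ, a v := Finset.sum_le_sum fun v hv => by
            simp only [hJdef, Finset.compl_filter, Finset.mem_filter, not_le] at hv
            exact hv.2.le
        _ ≤ ∑ v, a v := Finset.sum_le_sum_of_subset_of_nonneg (Finset.subset_univ _)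
            fun v _ _ => ha v
        _ = 1 := hsum
    calc ∑ v ∈ Jᶜ, c v ≤ ∑ v ∈ Jᶜ, b := Finset.sum_le_sum fun v _ => hcb v
      _ = (Jᶜ.card : ℝ) * (b / η) * η := by simp; field_simp
      _ ≤ 1 * η := by gcongr
      _ = η := one_mul η
  have hJ : 1 - 2 * η ≤ ∑ v ∈ J, a v := by
    have h1 : ∑ v ∈ J, c v + ∑ v ∈ Jᶜ, c v = ∑ v, c v := Finset.sum_add_sum_compl _ _
    have h2 : ∑ v ∈ J, c v ≤ ∑ v ∈ J, a v := Finset.sum_le_sum fun v _ => hca v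
    linarith
  have hlog : 0 ≤ Real.log (η / b) := Real.log_nonneg (by rwa [le_div_iff₀ hb, one_mul])
  calc (1 - 2 * η) * Real.log (η / b) ≤ (∑ v ∈ J, a v) * Real.log (η / b) := by gcongr
    _ = ∑ v ∈ J, a v * Real.log (η / b) := Finset.sum_mul _ _ _
    _ ≤ ∑ v ∈ J, Real.negMulLog (a v) := Finset.sum_le_sum fun v hv => by
        rcases (ha v).eq_or_lt with h | h
        · rw [← h]; simp
        · have hv' : a v ≤ b / η := by simpa [hJdef] using hv
          rw [Real.negMulLog, neg_mul, ← mul_neg, ← Real.log_inv]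
          gcongr
          rw [le_inv_comm₀ (by positivity) h, inv_div]
          exact hv'
    _ ≤ ∑ v, Real.negMulLog (a v) := Finset.sum_le_sum_of_subset_of_nonneg
        (Finset.subset_univ _) fun v _ _ => Real.negMulLog_nonneg (ha v) (ha1 v)
    _ = shannonEnt (ν.map F) := rfl

/-- Hamming balls of small relative radius have subexponential cardinality. -/
lemma exists_hammingBall_card_le (α : Type*) [Fintype α] [DecidableEq α] {ε : ℝ} (hε : 0 < ε) :
    ∃ η : ℝ, 0 < η ∧ ∀ (n : ℕ) (v : Fin n → α) (B : Finset (Fin n → α)),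
      (∀ w ∈ B, (hammingDist w v : ℝ) ≤ η * n) → (B.card : ℝ) ≤ Real.exp (ε * n) := by
  obtain ⟨t, ht0, ht1, ht⟩ : ∃ t : ℝ, 0 < t ∧ t < 1 ∧ (Fintype.card α : ℝ) * t ≤ ε / 2 := by
    refine ⟨min (1 / 2) (ε / 2 / (Fintype.card α + 1)), by positivity,
      (min_le_left _ _).trans_lt (by norm_num), ?_⟩
    calc (Fintype.card α : ℝ) * min (1 / 2) (ε / 2 / (Fintype.card α + 1))
        ≤ (Fintype.card α + 1 : ℝ) * (ε / 2 / (Fintype.card α + 1)) := by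
          gcongr
          · linarith
          · exact min_le_right _ _
      _ = ε / 2 := by field_simp
  have hlog : Real.log t < 0 := Real.log_neg ht0 ht1
  refine ⟨ε / 2 / (-Real.log t), div_pos (by positivity) (by linarith), fun N v B hB => ?_⟩
  set η := ε / 2 / (-Real.log t) with hη
  have h1 : (B.card : ℝ) * Real.exp (-(ε / 2) * N) ≤ Real.exp (ε / 2 * N) := by
    calc (B.card : ℝ) * Real.exp (-(ε / 2) * N) = ∑ w ∈ B, Real.exp (-(ε / 2) * N) := by simp
      _ ≤ ∑ w ∈ B, ∏ i, (if w i ≠ v i then t else 1) := by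
          refine Finset.sum_le_sum fun w hw => ?_
          rw [← Finset.prod_filter, Finset.prod_const, ← Real.rpow_natCast,
            Real.rpow_def_of_pos ht0, Real.exp_le_exp]
          have : -(ε / 2) * N = Real.log t * (η * N) := by
            have := hlog.ne
            rw [hη, div_neg, ← mul_assoc, mul_neg, mul_div_cancel₀ _ this]
          rw [this]
          exact mul_le_mul_of_nonpos_left (hB w hw) hlog.le
      _ ≤ ∑ w : Fin N → α, ∏ i, (if w i ≠ v i then t else 1) := by
          refine Finset.sum_le_sum_of_subset_of_nonneg (Finset.subset_univ _) fun w _ _ => ?_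
          refine Finset.prod_nonneg fun i _ => ?_
          split_ifs <;> positivity
      _ = ∏ i : Fin N, ∑ a : α, (if a ≠ v i then t else 1) :=
          (Fintype.prod_sum fun i (a : α) => if a ≠ v i then t else (1 : ℝ)).symm
      _ ≤ ∏ i : Fin N, Real.exp (ε / 2) := by
          refine Finset.prod_le_prod (fun i _ => Finset.sum_nonneg fun a _ => ?_) fun i _ => ?_
          · split_ifs <;> positivity
          · calc ∑ a : α, (if a ≠ v i then t else 1)
                ≤ ∑ a : α, (t + if a = v i then 1 else 0) := by
                  refine Finset.sum_le_sum fun a _ => ?_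
                  by_cases h : a = v i <;> simp [h, ht0.le]
              _ = Fintype.card α * t + 1 := by simp [Finset.sum_add_distrib]
              _ ≤ ε / 2 + 1 := by linarith
              _ ≤ Real.exp (ε / 2) := Real.add_one_le_exp _
      _ = Real.exp (ε / 2 * N) := by
          rw [Finset.prod_const, Finset.card_univ, ← Real.exp_nat_mul, Fintype.card_fin, mul_comm]
  have h2 : (B.card : ℝ) = (B.card : ℝ) * Real.exp (-(ε / 2) * N) * Real.exp (ε / 2 * N) := by
    rw [mul_assoc, ← Real.exp_add]; simp
  rw [h2]
  calc _ ≤ Real.exp (ε / 2 * N) * Real.exp (ε / 2 * N) := by gcongr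
    _ = Real.exp (ε * N) := by rw [← Real.exp_add]; ring_nf

end EntropyCounting

section Shift

/-- Translation of a bi-infinite sequence by an integer. -/
def shiftBy (j : ℤ) (u : BSeq) : BSeq := fun n => u (n + j)

lemma shiftBy_shiftBy (i j : ℤ) (u : BSeq) : shiftBy i (shiftBy j u) = shiftBy (i + j) u := by
  funext n
  simp only [shiftBy]
  ring_nf

lemma measurable_shiftBy (j : ℤ) : Measurable (shiftBy j) :=
  measurable_pi_lambda _ fun n => measurable_pi_apply (n + j)

lemma shiftMap_eq_shiftBy : shiftMap = shiftBy 1 := rfl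

lemma kabs_le {u : BSeq} {n : ℤ} (hn : u n = true) : kabs u ≤ n.natAbs :=
  Nat.sInf_le ⟨n, rfl, hn⟩

lemma exists_natAbs_eq_kabs {u : BSeq} {n : ℤ} (hn : u n = true) :
    ∃ m : ℤ, m.natAbs = kabs u ∧ u m = true :=
  Nat.sInf_mem (s := {m : ℕ | ∃ n : ℤ, n.natAbs = m ∧ u n = true}) ⟨_, n, rfl, hn⟩

lemma kabs_congr {u v : BSeq} {d : ℕ} (hd : ∃ n : ℤ, n.natAbs ≤ d ∧ u n = true)
    (h : ∀ n : ℤ, n.natAbs ≤ d → u n = v n) : kabs u = kabs v := by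
  obtain ⟨n, hn, hun⟩ := hd
  have hvn : v n = true := (h n hn) ▸ hun
  refine le_antisymm ?_ ?_
  · obtain ⟨m, hm, hvm⟩ := exists_natAbs_eq_kabs hvn
    rw [← hm]
    refine kabs_le ((h m ?_).trans hvm)
    exact hm.le.trans ((kabs_le hvn).trans hn)
  · obtain ⟨m, hm, hum⟩ := exists_natAbs_eq_kabs hun
    rw [← hm]
    refine kabs_le ((h m ?_).symm.trans hum)
    exact hm.le.trans ((kabs_le hun).trans hn)

lemma ne_zeroSeq_of_apply {u : BSeq} {n : ℤ} (hn : u n = true) : u ≠ zeroSeq := by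
  rintro rfl
  simp [zeroSeq] at hn

lemma fRoof_congr (g : ℕ → ℝ) {u v : BSeq} {a b : ℤ} (ha : a ≤ 0) (hb : 0 ≤ b) (hua : u a = true)
    (hub : u b = true) (h : ∀ n, a ≤ n → n ≤ b → u n = v n) : fRoof g u = fRoof g v := by
  have hva : v a = true := (h a le_rfl (ha.trans hb)) ▸ hua
  rw [fRoof, fRoof, if_neg (ne_zeroSeq_of_apply hua), if_neg (ne_zeroSeq_of_apply hva)]
  congr 1
  rcases le_total (-a) b with hab | hab
  · exact kabs_congr (d := a.natAbs) ⟨a, le_rfl, hua⟩ fun n hn => h n (by omega) (by omega)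
  · exact kabs_congr (d := b.natAbs) ⟨b, le_rfl, hub⟩ fun n hn => h n (by omega) (by omega)

lemma fRoof_nonneg {g : ℕ → ℝ} (hg : ∀ k, 0 < g k) (u : BSeq) : 0 ≤ fRoof g u := by
  rw [fRoof]
  split_ifs
  · exact le_rfl
  · exact (hg _).le

lemma fRoof_le {g : ℕ → ℝ} {C : ℝ} (hC0 : 0 ≤ C) (hC : ∀ k, g k ≤ C) (u : BSeq) :
    fRoof g u ≤ C := by
  rw [fRoof]
  split_ifs
  · exact hC0
  · exact hC _

/-- Uniform limits of functions of finitely many coordinates. -/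
def UnifLocal (F : BSeq → ℝ) : Prop :=
  ∀ ε > 0, ∃ (s : Finset ℤ) (F' : BSeq → ℝ), DependsOn F' (s : Set ℤ) ∧ ∀ u, |F u - F' u| ≤ ε

lemma DependsOn.exists_comp_restrict {F : BSeq → ℝ} {s : Finset ℤ}
    (hF : DependsOn F (s : Set ℤ)) :
    ∃ φ : (s → Bool) → ℝ, ∀ u, F u = φ fun i => u i := by
  classical
  refine ⟨fun w => F fun n => if h : n ∈ s then w ⟨n, h⟩ else false, fun u => ?_⟩
  refine hF fun i hi => ?_
  have : i ∈ s := hi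
  simp [this]

lemma DependsOn.measurable_of_finset {F : BSeq → ℝ} {s : Finset ℤ}
    (hF : DependsOn F (s : Set ℤ)) : Measurable F := by
  obtain ⟨φ, hφ⟩ := hF.exists_comp_restrict
  rw [funext hφ]
  exact (measurable_of_finite φ).comp (measurable_pi_lambda _ fun i => measurable_pi_apply _)

lemma DependsOn.exists_abs_le {F : BSeq → ℝ} {s : Finset ℤ}
    (hF : DependsOn F (s : Set ℤ)) : ∃ B, 0 ≤ B ∧ ∀ u, |F u| ≤ B := by
  obtain ⟨φ, hφ⟩ := hF.exists_comp_restrict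
  refine ⟨∑ w, |φ w|, Finset.sum_nonneg fun _ _ => abs_nonneg _, fun u => ?_⟩
  rw [hφ]
  exact Finset.single_le_sum (f := fun w => |φ w|) (fun _ _ => abs_nonneg _) (Finset.mem_univ _)

lemma UnifLocal.measurable {F : BSeq → ℝ} (hF : UnifLocal F) : Measurable F := by
  choose s F' hdep hF' using fun n : ℕ => hF (1 / ((n : ℝ) + 1)) (by positivity)
  refine measurable_of_tendsto_metrizable (f := F')
    (fun n => (hdep n).measurable_of_finset) (tendsto_pi_nhds.2 fun u => ?_)
  rw [tendsto_iff_dist_tendsto_zero]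
  refine squeeze_zero (fun _ => dist_nonneg) (fun n => ?_) tendsto_one_div_add_atTop_nhds_zero_nat
  rw [dist_comm]
  exact hF' n u

lemma UnifLocal.exists_abs_le {F : BSeq → ℝ} (hF : UnifLocal F) : ∃ B, ∀ u, |F u| ≤ B := by
  obtain ⟨s, F', hdep, hF'⟩ := hF 1 one_pos
  obtain ⟨B, -, hB⟩ := hdep.exists_abs_le
  refine ⟨1 + B, fun u => ?_⟩
  calc |F u| = |(F u - F' u) + F' u| := by ring_nf
    _ ≤ |F u - F' u| + |F' u| := abs_add_le _ _
    _ ≤ 1 + B := add_le_add (hF' u) (hB u)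

lemma unifLocal_apply_zero (ξ : Bool → ℝ) : UnifLocal fun u => ξ (u 0) := by
  refine fun ε hε => ⟨{0}, fun u => ξ (u 0), fun u v h => ?_, fun u => by simpa using hε.le⟩
  simp only
  rw [h 0 (by simp)]

lemma unifLocal_fRoof {g : ℕ → ℝ} (hg : Tendsto g atTop (𝓝 0)) : UnifLocal (fRoof g) := by
  classical
  intro ε hε
  obtain ⟨K, hK⟩ := (Metric.tendsto_atTop.1 hg) ε hε
  refine ⟨Finset.Icc (-(K : ℤ)) K, fun u => if ∃ n : ℤ, n.natAbs ≤ K ∧ u n = true then g (kabs u)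
    else 0, fun u v h => ?_, fun u => ?_⟩
  · have h' : ∀ n : ℤ, n.natAbs ≤ K → u n = v n := fun n hn => by
      refine h n ?_
      simp only [Finset.coe_Icc, Set.mem_Icc]
      omega
    have hiff : (∃ n : ℤ, n.natAbs ≤ K ∧ u n = true) ↔ ∃ n : ℤ, n.natAbs ≤ K ∧ v n = true :=
      ⟨fun ⟨n, hn, hu⟩ => ⟨n, hn, (h' n hn) ▸ hu⟩, fun ⟨n, hn, hu⟩ => ⟨n, hn, (h' n hn) ▸ hu⟩⟩
    by_cases hu : ∃ n : ℤ, n.natAbs ≤ K ∧ u n = true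
    · simp only [if_pos hu, if_pos (hiff.1 hu), kabs_congr hu h']
    · simp only [if_neg hu, if_neg (mt hiff.2 hu)]
  · by_cases hu : ∃ n : ℤ, n.natAbs ≤ K ∧ u n = true
    · obtain ⟨n, _, hn⟩ := id hu
      simp only [if_pos hu, fRoof, if_neg (ne_zeroSeq_of_apply hn), sub_self, abs_zero, hε.le]
    · simp only [if_neg hu, sub_zero, fRoof]
      split_ifs with h0
      · simpa using hε.le
      · obtain ⟨n, hn⟩ : ∃ n, u n = true := by
          by_contra! hcon
          exact h0 (funext fun n => by simpa [zeroSeq] using hcon n)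
        obtain ⟨m, hm, hum⟩ := exists_natAbs_eq_kabs hn
        have : K ≤ kabs u := by
          by_contra! hlt
          exact hu ⟨m, by omega, hum⟩
        simpa [Real.dist_eq] using (hK _ this).le

end Shift

section Coding

/-- The index of the first partial sum exceeding `a`, minus one. -/
noncomputable def crossIdx (S : ℕ → ℝ) (a : ℝ) : ℕ := sInf {j | a < S (j + 1)}

lemma lt_crossIdx_iff {S : ℕ → ℝ} (hS : Monotone S) {a : ℝ} (ha : ∃ j, a < S j) (j : ℕ) :
    j < crossIdx S a ↔ S (j + 1) ≤ a := by
  have hne : {j | a < S (j + 1)}.Nonempty := by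
    obtain ⟨k, hk⟩ := ha
    exact ⟨k, hk.trans_le (hS (Nat.le_succ k))⟩
  constructor
  · intro h
    by_contra! hlt
    exact absurd (Nat.sInf_le (s := {j | a < S (j + 1)}) hlt) (not_le.2 h)
  · intro h
    by_contra! hle
    have h1 : a < S (crossIdx S a + 1) := Nat.sInf_mem hne
    exact absurd (h1.trans_le (hS (Nat.succ_le_succ hle))) (not_lt.2 h)

lemma crossIdx_spec {S : ℕ → ℝ} (hS : Monotone S) {a : ℝ} (ha : ∃ j, a < S j) (h0 : S 0 ≤ a) :
    S (crossIdx S a) ≤ a ∧ a < S (crossIdx S a + 1) := by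
  refine ⟨?_, ?_⟩
  · rcases Nat.eq_zero_or_pos (crossIdx S a) with h | h
    · rwa [h]
    · have := (lt_crossIdx_iff hS ha (crossIdx S a - 1)).1 (by omega)
      rwa [Nat.sub_add_cancel h] at this
  · have := mt (lt_crossIdx_iff hS ha (crossIdx S a)).2 (lt_irrefl _)
    exact not_le.1 this

lemma le_of_block_lt {N N' : ℕ → ℕ} (hN : Monotone N) {x x' : ℕ → Bool} {K M i : ℕ}
    (hK : 0 < K)
    (hq : ∀ r < K, ∀ b, (N i + r < N (i + 1) ∧ x (N i + r) = b) ↔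
      (N' i + r < N' (i + 1) ∧ x' (N' i + r) = b))
    (hlost : ∀ j < M, ∀ b, ((∃ i, N i + K ≤ j ∧ j < N (i + 1)) ∧ x j = b) ↔
      ((∃ i, N' i + K ≤ j ∧ j < N' (i + 1)) ∧ x' j = b))
    (hi : N i = N' i) (hlt : N (i + 1) < N' (i + 1)) : M ≤ N (i + 1) := by
  have hmN : N i ≤ N (i + 1) := hN (Nat.le_succ i)
  by_contra! hdM
  rcases lt_or_ge (N (i + 1)) (N i + K) with h | h
  · have := (hq (N (i + 1) - N i) (by omega) _).2 ⟨by omega, rfl⟩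
    omega
  · obtain ⟨⟨i', hi1, hi2⟩, _⟩ := (hlost (N (i + 1)) hdM _).2 ⟨⟨i, by omega, hlt⟩, rfl⟩
    rcases lt_or_ge i' (i + 1) with h | h
    · have := hN (show i' + 1 ≤ i + 1 by omega)
      omega
    · have := hN h
      omega

/-- A word is determined by the first `K` symbols of each block of a block decomposition together
with the positions and values of the remaining symbols. -/
lemma word_eq_of_blocks {N N' : ℕ → ℕ} (hN : Monotone N) (hN' : Monotone N') (h0 : N 0 = 0)
    (h0' : N' 0 = 0) {x x' : ℕ → Bool} {K M n : ℕ} (hK : 0 < K) (hM : M ≤ N n)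
    (hq : ∀ i < n, ∀ r < K, ∀ b, (N i + r < N (i + 1) ∧ x (N i + r) = b) ↔
      (N' i + r < N' (i + 1) ∧ x' (N' i + r) = b))
    (hlost : ∀ j < M, ∀ b, ((∃ i, N i + K ≤ j ∧ j < N (i + 1)) ∧ x j = b) ↔
      ((∃ i, N' i + K ≤ j ∧ j < N' (i + 1)) ∧ x' j = b)) :
    ∀ j < M, x j = x' j := by
  have key : ∀ i ≤ n, (N i = N' i ∨ (M ≤ N i ∧ M ≤ N' i)) ∧ ∀ j < M, j < N i → x j = x' j := by
    intro i
    induction i with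
    | zero => intro _; exact ⟨Or.inl (h0.trans h0'.symm), fun j _ hj => by omega⟩
    | succ i ih =>
      intro hi
      obtain ⟨h1, h2⟩ := ih (by omega)
      have hmN : N i ≤ N (i + 1) := hN (Nat.le_succ i)
      have hmN' : N' i ≤ N' (i + 1) := hN' (Nat.le_succ i)
      rcases h1 with h1 | ⟨h1, h1'⟩
      · refine ⟨?_, fun j hjM hj => ?_⟩
        · rcases lt_trichotomy (N (i + 1)) (N' (i + 1)) with hlt | heq | hgt
          · have := le_of_block_lt hN hK (hq i (by omega)) hlost h1 hlt
            exact Or.inr ⟨this, by omega⟩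
          · exact Or.inl heq
          · have := le_of_block_lt hN' hK (fun r hr b => (hq i (by omega) r hr b).symm)
              (fun j hj b => (hlost j hj b).symm) h1.symm hgt
            exact Or.inr ⟨by omega, this⟩
        · rcases lt_or_ge j (N i) with h | h
          · exact h2 j hjM h
          · rcases lt_or_ge j (N i + K) with hjK | hjK
            · have := ((hq i (by omega) (j - N i) (by omega) (x j)).1
                ⟨by omega, by rw [Nat.add_sub_cancel' h]⟩).2
              rw [← h1, Nat.add_sub_cancel' h] at this
              exact this.symm
            · exact ((hlost j hjM (x j)).1 ⟨⟨i, hjK, hj⟩, rfl⟩).2.symm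
      · exact ⟨Or.inr ⟨by omega, by omega⟩, fun j hjM _ => h2 j hjM (by omega)⟩
  exact fun j hj => (key n le_rfl).2 j hj (by omega)

end Coding

section Bernoulli

/-- The cylinder probabilities of the Bernoulli measure of parameter `p`. -/
def HasBernoulliCylinders (p : ℝ) (m : Measure BSeq) : Prop :=
  ∀ (s : Finset ℤ) (v : ℤ → Bool), m {u : BSeq | ∀ n ∈ s, u n = v n}
    = ∏ n ∈ s, ENNReal.ofReal (if v n then p else 1 - p)

/-- The Bernoulli law of parameter `p` on `Bool`. -/
noncomputable def boolLaw (p : ℝ) : Measure Bool :=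
  ENNReal.ofReal p • Measure.dirac true + ENNReal.ofReal (1 - p) • Measure.dirac false

lemma boolLaw_singleton (p : ℝ) (b : Bool) :
    boolLaw p {b} = ENNReal.ofReal (if b then p else 1 - p) := by
  cases b <;> simp [boolLaw]

lemma isProbabilityMeasure_boolLaw {p : ℝ} (hp0 : 0 < p) (hp1 : p < 1) :
    IsProbabilityMeasure (boolLaw p) := by
  refine ⟨?_⟩
  simp only [boolLaw, Measure.coe_add, Measure.coe_smul, Pi.add_apply, Pi.smul_apply,
    measure_univ, smul_eq_mul, mul_one]
  rw [← ENNReal.ofReal_add hp0.le (by linarith)]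
  simp

variable {p : ℝ} {m : Measure BSeq}

lemma HasBernoulliCylinders.eq_infinitePi (hp0 : 0 < p) (hp1 : p < 1)
    (hm : HasBernoulliCylinders p m) :
    haveI := isProbabilityMeasure_boolLaw hp0 hp1
    m = Measure.infinitePi fun _ => boolLaw p := by
  have := isProbabilityMeasure_boolLaw hp0 hp1
  refine IsProjectiveLimit.unique (P := fun I : Finset ℤ => Measure.pi fun _ : I => boolLaw p)
    (fun I => ?_) (Measure.isProjectiveLimit_infinitePi _)
  classical
  refine Measure.ext_of_singleton fun w => ?_
  rw [Measure.pi_singleton, Measure.map_apply (by fun_prop) (measurableSet_singleton _)]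
  have h := hm I fun n => if h : n ∈ I then w ⟨n, h⟩ else false
  rw [← Finset.prod_attach] at h
  have hset : (I.restrict (π := fun _ => Bool)) ⁻¹' ({w} : Set (I → Bool))
      = {u : BSeq | ∀ n ∈ I, u n = if h : n ∈ I then w ⟨n, h⟩ else false} := by
    ext u
    simp only [Set.mem_preimage, Set.mem_singleton_iff, Set.mem_ofPred_eq, funext_iff,
      Finset.restrict, Subtype.forall]
    exact forall₂_congr fun n hn => by simp [hn]
  rw [hset, h]
  exact Finset.prod_congr rfl fun n _ => by simp [boolLaw_singleton]

lemma HasBernoulliCylinders.measurePreserving_shiftBy (hp0 : 0 < p) (hp1 : p < 1)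
    (hm : HasBernoulliCylinders p m) (j : ℤ) : MeasurePreserving (shiftBy j) m m := by
  have := isProbabilityMeasure_boolLaw hp0 hp1
  refine ⟨measurable_shiftBy j, ?_⟩
  rw [hm.eq_infinitePi hp0 hp1]
  exact Measure.map_infinitePi_infinitePi_of_inj (P := fun _ : ℤ => boolLaw p)
    (f := fun n : ℤ => n + j) (add_left_injective j)

lemma HasBernoulliCylinders.indepFun (hp0 : 0 < p) (hp1 : p < 1)
    (hm : HasBernoulliCylinders p m) {s t : Finset ℤ} (hst : Disjoint s t) {F G : BSeq → ℝ}
    (hF : DependsOn F (s : Set ℤ)) (hG : DependsOn G (t : Set ℤ)) :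
    ProbabilityTheory.IndepFun F G m := by
  have := isProbabilityMeasure_boolLaw hp0 hp1
  have hi : ProbabilityTheory.iIndepFun (fun (i : ℤ) (u : BSeq) => u i) m := by
    rw [hm.eq_infinitePi hp0 hp1]
    exact ProbabilityTheory.iIndepFun_infinitePi (X := fun _ b => b) (fun _ => measurable_id)
  obtain ⟨φ, hφ⟩ := hF.exists_comp_restrict
  obtain ⟨ψ, hψ⟩ := hG.exists_comp_restrict
  rw [funext hφ, funext hψ]
  exact (hi.indepFun_finset s t hst fun i => measurable_pi_apply i).comp
    (measurable_of_finite φ) (measurable_of_finite ψ)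

lemma DependsOn.comp_shiftBy {F : BSeq → ℝ} {s : Finset ℤ} (hF : DependsOn F (s : Set ℤ)) (j : ℤ) :
    DependsOn (fun u => F (shiftBy j u)) ((s.map (addRightEmbedding j) : Finset ℤ) : Set ℤ) := by
  refine fun u v h => hF fun i hi => h (i + j) ?_
  simpa using hi

lemma abs_covariance_le [IsProbabilityMeasure m] {X Y : BSeq → ℝ} {B : ℝ} (hB : 0 ≤ B)
    (hX : ∀ u, |X u| ≤ B) (hY : ∀ u, |Y u| ≤ B) :
    ProbabilityTheory.covariance X Y m ≤ 4 * B ^ 2 := by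
  have hmean : ∀ {Z : BSeq → ℝ}, (∀ u, |Z u| ≤ B) → ∀ u, |Z u - ∫ u, Z u ∂m| ≤ 2 * B := by
    intro Z hZ u
    have h1 : ‖∫ u, Z u ∂m‖ ≤ B * m.real Set.univ :=
      norm_integral_le_of_norm_le_const (ae_of_all _ hZ)
    rw [probReal_univ, mul_one, Real.norm_eq_abs] at h1
    have h2 := hZ u
    rw [abs_le] at *
    constructor <;> linarith
  have h : ‖∫ u, (X u - ∫ u, X u ∂m) * (Y u - ∫ u, Y u ∂m) ∂m‖
      ≤ (2 * B * (2 * B)) * m.real Set.univ :=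
    norm_integral_le_of_norm_le_const (ae_of_all _ fun u => by
      rw [Real.norm_eq_abs, abs_mul]
      exact mul_le_mul (hmean hX u) (hmean hY u) (abs_nonneg _) (by positivity))
  rw [probReal_univ, mul_one] at h
  calc _ ≤ _ := (le_abs_self _).trans h
    _ = 4 * B ^ 2 := by ring

lemma HasBernoulliCylinders.integral_comp_shiftBy (hp0 : 0 < p) (hp1 : p < 1)
    (hm : HasBernoulliCylinders p m) {F : BSeq → ℝ} (hF : Measurable F) (j : ℤ) :
    ∫ u, F (shiftBy j u) ∂m = ∫ u, F u ∂m := by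
  have h := hm.measurePreserving_shiftBy hp0 hp1 j
  conv_rhs => rw [← h.map_eq]
  rw [integral_map (measurable_shiftBy j).aemeasurable hF.aestronglyMeasurable]

lemma HasBernoulliCylinders.measure_sum_local_ge_le [IsProbabilityMeasure m] (hp0 : 0 < p)
    (hp1 : p < 1) (hm : HasBernoulliCylinders p m) {F : BSeq → ℝ} {s : Finset ℤ}
    (hF : DependsOn F (s : Set ℤ)) {B : ℝ} (hB0 : 0 ≤ B) (hB : ∀ u, |F u| ≤ B) {ε : ℝ}
    (hε : 0 < ε) {T : Finset ℤ} (hT : 0 < T.card) :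
    m {u | ε * T.card ≤ |∑ j ∈ T, F (shiftBy j u) - T.card * ∫ u, F u ∂m|}
      ≤ ENNReal.ofReal ((s.card : ℝ) ^ 2 * (4 * B ^ 2) / ε ^ 2 / T.card) := by
  classical
  have hT' : (0 : ℝ) < T.card := by exact_mod_cast hT
  set X : ℤ → BSeq → ℝ := fun j u => F (shiftBy j u) with hX
  have hFm := hF.measurable_of_finset
  have hXm : ∀ j, MemLp (X j) 2 m := fun j =>
    MemLp.of_bound (hFm.comp (measurable_shiftBy j)).aestronglyMeasurable B
      (ae_of_all _ fun u => hB _)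
  have hSm : MemLp (fun u => ∑ j ∈ T, X j u) 2 m := memLp_finsetSum T fun j _ => hXm j
  have hmean : ∫ u, ∑ j ∈ T, X j u ∂m = T.card * ∫ u, F u ∂m := by
    rw [integral_finsetSum _ fun j _ => (hXm j).integrable (by norm_num)]
    simp [hX, hm.integral_comp_shiftBy hp0 hp1 hFm]
  have hcov : ∀ i j, (i - j) ∉ (s ×ˢ s).image (fun q => q.2 - q.1) →
      ProbabilityTheory.covariance (X i) (X j) m = 0 := by
    intro i j hij
    refine ProbabilityTheory.IndepFun.covariance_eq_zero ?_ (hXm i) (hXm j)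
    refine hm.indepFun hp0 hp1 ?_ (hF.comp_shiftBy i) (hF.comp_shiftBy j)
    rw [Finset.disjoint_left]
    intro n hn hn'
    simp only [Finset.mem_map, addRightEmbedding_apply] at hn hn'
    obtain ⟨a, ha, rfl⟩ := hn
    obtain ⟨b, hb, hab⟩ := hn'
    refine hij (Finset.mem_image.2 ⟨(a, b), Finset.mem_product.2 ⟨ha, hb⟩, ?_⟩)
    simp only
    linarith
  have hvar : ProbabilityTheory.variance (fun u => ∑ j ∈ T, X j u) m
      ≤ T.card * ((s.card : ℝ) ^ 2 * (4 * B ^ 2)) := by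
    rw [ProbabilityTheory.variance_fun_sum' fun j _ => hXm j, ← nsmul_eq_mul]
    refine Finset.sum_le_card_nsmul _ _ _ fun i _ => ?_
    calc ∑ j ∈ T, ProbabilityTheory.covariance (X i) (X j) m
        ≤ ∑ j ∈ T, if (i - j) ∈ (s ×ˢ s).image (fun q => q.2 - q.1) then 4 * B ^ 2 else 0 := by
          refine Finset.sum_le_sum fun j _ => ?_
          split_ifs with h
          · exact abs_covariance_le hB0 (fun u => hB _) (fun u => hB _)
          · exact (hcov i j h).le
      _ = ((T.filter fun j => (i - j) ∈ (s ×ˢ s).image (fun q => q.2 - q.1)).card : ℝ)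
            * (4 * B ^ 2) := by
          rw [← Finset.sum_filter, Finset.sum_const, nsmul_eq_mul]
      _ ≤ (s.card : ℝ) ^ 2 * (4 * B ^ 2) := by
          gcongr
          have h1 : (T.filter fun j => (i - j) ∈ (s ×ˢ s).image (fun q => q.2 - q.1)).card
              ≤ ((s ×ˢ s).image (fun q => q.2 - q.1)).card :=
            Finset.card_le_card_of_injOn (fun j => i - j)
              (fun j hj => (Finset.mem_filter.1 hj).2) fun j _ j' _ h => by
                simpa using h
          have h2 := h1.trans Finset.card_image_le
          rw [Finset.card_product, ← sq] at h2
          exact_mod_cast h2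
  have hcheb := ProbabilityTheory.meas_ge_le_variance_div_sq hSm (c := ε * T.card) (by positivity)
  rw [hmean] at hcheb
  refine hcheb.trans (ENNReal.ofReal_le_ofReal ?_)
  calc _ ≤ T.card * ((s.card : ℝ) ^ 2 * (4 * B ^ 2)) / (ε * T.card) ^ 2 := by gcongr
    _ = _ := by field_simp

/-- The weak law of large numbers along finite sets of translates. -/
lemma HasBernoulliCylinders.exists_measure_sum_ge_le [IsProbabilityMeasure m] (hp0 : 0 < p)
    (hp1 : p < 1) (hm : HasBernoulliCylinders p m) {F : BSeq → ℝ} (hF : UnifLocal F) {ε δ : ℝ}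
    (hε : 0 < ε) (hδ : 0 < δ) :
    ∃ L : ℕ, ∀ T : Finset ℤ, L ≤ T.card →
      m {u | ε * T.card ≤ |∑ j ∈ T, F (shiftBy j u) - T.card * ∫ u, F u ∂m|}
        ≤ ENNReal.ofReal δ := by
  obtain ⟨s, F', hdep, hF'⟩ := hF (ε / 4) (by positivity)
  obtain ⟨B, hB0, hB⟩ := hdep.exists_abs_le
  obtain ⟨B', hB'⟩ := hF.exists_abs_le
  have h_int : |∫ u, F u ∂m - ∫ u, F' u ∂m| ≤ ε / 4 := by
    have i1 : Integrable F m := Integrable.of_bound hF.measurable.aestronglyMeasurable B'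
      (ae_of_all _ hB')
    have i2 : Integrable F' m := Integrable.of_bound
      hdep.measurable_of_finset.aestronglyMeasurable B (ae_of_all _ hB)
    rw [← integral_sub i1 i2]
    have := norm_integral_le_of_norm_le_const (μ := m) (f := fun u => F u - F' u) (C := ε / 4)
      (ae_of_all _ hF')
    rwa [probReal_univ, mul_one] at this
  set A := (s.card : ℝ) ^ 2 * (4 * B ^ 2) / (ε / 2) ^ 2 with hA
  have hA0 : 0 ≤ A := by positivity
  refine ⟨⌈A / δ⌉₊ + 1, fun T hT => ?_⟩
  have hT' : (0 : ℝ) < T.card := by exact_mod_cast (by omega : 0 < T.card)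
  calc m {u | ε * T.card ≤ |∑ j ∈ T, F (shiftBy j u) - T.card * ∫ u, F u ∂m|}
      ≤ m {u | ε / 2 * T.card ≤ |∑ j ∈ T, F' (shiftBy j u) - T.card * ∫ u, F' u ∂m|} := by
        refine measure_mono fun u hu => ?_
        simp only [Set.mem_ofPred_eq] at hu ⊢
        have h1 : |∑ j ∈ T, F (shiftBy j u) - ∑ j ∈ T, F' (shiftBy j u)| ≤ T.card * (ε / 4) := by
          rw [← Finset.sum_sub_distrib, ← nsmul_eq_mul]
          exact (Finset.abs_sum_le_sum_abs _ _).trans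
            (Finset.sum_le_card_nsmul _ _ _ fun j _ => hF' _)
        have h2 : |(T.card : ℝ) * ∫ u, F u ∂m - T.card * ∫ u, F' u ∂m| ≤ T.card * (ε / 4) := by
          rw [← mul_sub, abs_mul, abs_of_pos hT']
          gcongr
        have h3 : |∑ j ∈ T, F (shiftBy j u) - T.card * ∫ u, F u ∂m|
            ≤ |∑ j ∈ T, F (shiftBy j u) - ∑ j ∈ T, F' (shiftBy j u)|
              + |∑ j ∈ T, F' (shiftBy j u) - T.card * ∫ u, F' u ∂m|
              + |(T.card : ℝ) * ∫ u, F u ∂m - T.card * ∫ u, F' u ∂m| := by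
          rw [abs_sub_comm ((T.card : ℝ) * _)]
          refine le_trans (le_of_eq ?_) (abs_add_three _ _ _)
          ring_nf
        linarith
    _ ≤ ENNReal.ofReal (A / T.card) :=
        hm.measure_sum_local_ge_le hp0 hp1 hdep hB0 hB (by positivity) (by omega)
    _ ≤ ENNReal.ofReal δ := by
        refine ENNReal.ofReal_le_ofReal ?_
        rw [div_le_iff₀ hT', ← div_le_iff₀' hδ]
        exact (Nat.le_ceil _).trans (by exact_mod_cast (by omega))

end Bernoulli

section Asymptotics

variable {p : ℝ} {m : Measure BSeq} {g : ℕ → ℝ}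

lemma HasBernoulliCylinders.measure_false (hm : HasBernoulliCylinders p m) (s : Finset ℤ) :
    m {u : BSeq | ∀ n ∈ s, u n = false} = ENNReal.ofReal (1 - p) ^ s.card := by
  have := hm s fun _ => false
  simpa using this

lemma HasBernoulliCylinders.measureReal_false (hp1 : p < 1) (hm : HasBernoulliCylinders p m)
    (s : Finset ℤ) : m.real {u : BSeq | ∀ n ∈ s, u n = false} = (1 - p) ^ s.card := by
  rw [measureReal_def, hm.measure_false, ENNReal.toReal_pow, ENNReal.toReal_ofReal (by linarith)]

lemma HasBernoulliCylinders.measure_zeroSeq (hp0 : 0 < p) (hp1 : p < 1)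
    [IsProbabilityMeasure m] (hm : HasBernoulliCylinders p m) : m {zeroSeq} = 0 := by
  rw [← measureReal_eq_zero_iff]
  refine le_antisymm (ge_of_tendsto' (tendsto_pow_atTop_nhds_zero_of_lt_one
    (sub_nonneg.2 hp1.le) (sub_lt_self 1 hp0)) fun n => ?_) measureReal_nonneg
  have h := hm.measureReal_false hp1 (Finset.Ico 0 (n : ℤ))
  rw [Int.card_Ico, sub_zero, Int.toNat_natCast] at h
  rw [← h]
  refine measureReal_mono ?_
  rintro u rfl n _
  rfl

lemma kabs_zeroSeq : kabs zeroSeq = 0 := by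
  simp [kabs, zeroSeq]

lemma exists_apply_of_ne_zeroSeq {u : BSeq} (hu : u ≠ zeroSeq) : ∃ n, u n = true := by
  by_contra! hcon
  exact hu (funext fun n => by simpa [zeroSeq] using hcon n)

lemma kabs_eq_succ_iff {u : BSeq} {k : ℕ} : kabs u = k + 1 ↔
    (∀ n ∈ Finset.Icc (-(k : ℤ)) k, u n = false) ∧
      ¬ ∀ n ∈ Finset.Icc (-((k + 1 : ℕ) : ℤ)) (k + 1 : ℕ), u n = false := by
  constructor
  · intro h
    refine ⟨fun n hn => ?_, fun hcon => ?_⟩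
    · by_contra hne
      have := kabs_le (Bool.eq_true_of_not_eq_false hne)
      rw [Finset.mem_Icc] at hn
      omega
    · have hu : u ≠ zeroSeq := by rintro rfl; rw [kabs_zeroSeq] at h; omega
      obtain ⟨n, hn⟩ := exists_apply_of_ne_zeroSeq hu
      obtain ⟨i, hi, hui⟩ := exists_natAbs_eq_kabs hn
      have := hcon i (by rw [Finset.mem_Icc]; omega)
      rw [hui] at this
      exact absurd this (by simp)
  · rintro ⟨h1, h2⟩
    push Not at h2
    obtain ⟨n, hn, hun⟩ := h2
    have hun := Bool.eq_true_of_not_eq_false hun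
    have h3 := kabs_le hun
    obtain ⟨i, hi, hui⟩ := exists_natAbs_eq_kabs hun
    rw [Finset.mem_Icc] at hn
    by_contra hne
    have := h1 i (by rw [Finset.mem_Icc]; omega)
    rw [hui] at this
    exact absurd this (by simp)

lemma measurableSet_false_on (s : Finset ℤ) :
    MeasurableSet {u : BSeq | ∀ n ∈ s, u n = false} := by
  have : {u : BSeq | ∀ n ∈ s, u n = false} = ⋂ n ∈ s, {u : BSeq | u n = false} := by
    ext u; simp
  rw [this]
  exact Finset.measurableSet_biInter _ fun n _ =>
    measurableSet_eq_fun (measurable_pi_apply n) measurable_const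

lemma kabs_eq_zero_iff {u : BSeq} : kabs u = 0 ↔ u 0 = true ∨ u = zeroSeq := by
  constructor
  · intro h
    by_cases hu : u = zeroSeq
    · exact Or.inr hu
    · obtain ⟨n, hn⟩ := exists_apply_of_ne_zeroSeq hu
      obtain ⟨i, hi, hui⟩ := exists_natAbs_eq_kabs hn
      rw [h, Int.natAbs_eq_zero] at hi
      exact Or.inl (hi ▸ hui)
  · rintro (h | rfl)
    · simpa using kabs_le h
    · exact kabs_zeroSeq

lemma measurableSet_kabs_eq (k : ℕ) : MeasurableSet {u : BSeq | kabs u = k} := by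
  rcases k with _ | k
  · simp only [kabs_eq_zero_iff]
    exact (measurable_pi_apply 0 (measurableSet_singleton true)).union
      (measurableSet_singleton zeroSeq)
  · simp only [kabs_eq_succ_iff]
    exact (measurableSet_false_on _).inter (measurableSet_false_on _).compl

lemma measurable_kabs : Measurable kabs := measurable_to_countable' measurableSet_kabs_eq

lemma HasBernoulliCylinders.measureReal_kabs_succ (hp1 : p < 1)
    [IsProbabilityMeasure m] (hm : HasBernoulliCylinders p m) (k : ℕ) :
    m.real {u | kabs u = k + 1} = (1 - p) ^ (2 * k + 1) - (1 - p) ^ (2 * k + 3) := by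
  have h : {u | kabs u = k + 1} = {u : BSeq | ∀ n ∈ Finset.Icc (-(k : ℤ)) k, u n = false} \
      {u : BSeq | ∀ n ∈ Finset.Icc (-((k + 1 : ℕ) : ℤ)) (k + 1 : ℕ), u n = false} := by
    ext u
    exact kabs_eq_succ_iff
  rw [h, measureReal_sdiff _ (measurableSet_false_on _), hm.measureReal_false hp1,
    hm.measureReal_false hp1]
  · rw [Int.card_Icc, Int.card_Icc]
    congr 2 <;> omega
  · intro u hu n hn
    refine hu n ?_
    rw [Finset.mem_Icc] at *
    omega

lemma HasBernoulliCylinders.measureReal_kabs_zero (hp0 : 0 < p) (hp1 : p < 1)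
    [IsProbabilityMeasure m] (hm : HasBernoulliCylinders p m) :
    m.real {u | kabs u = 0} = p := by
  have h1 : {u | kabs u = 0} =ᵐ[m] {u : BSeq | u 0 = true} := by
    have : ∀ᵐ u ∂m, u ≠ zeroSeq := by
      rw [ae_iff]; simpa using hm.measure_zeroSeq hp0 hp1
    filter_upwards [this] with u hu
    refine propext ?_
    change kabs u = 0 ↔ u 0 = true
    rw [kabs_eq_zero_iff]
    tauto
  rw [measureReal_congr h1]
  have := hm {0} fun _ => true
  rw [measureReal_def]
  simp only [Finset.mem_singleton, forall_eq, Finset.prod_singleton, if_true] at this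
  rw [this, ENNReal.toReal_ofReal hp0.le]

lemma summable_mul_pow_of_bounded {a : ℕ → ℝ} {C q : ℝ} (ha : ∀ k, |a k| ≤ C) (hq0 : 0 ≤ q)
    (hq1 : q < 1) : Summable fun k => a k * q ^ k := by
  refine Summable.of_norm_bounded ((summable_geometric_of_lt_one hq0 hq1).mul_left C) fun k => ?_
  rw [Real.norm_eq_abs, abs_mul, abs_of_nonneg (pow_nonneg hq0 k)]
  exact mul_le_mul_of_nonneg_right (ha k) (pow_nonneg hq0 k)

lemma HasBernoulliCylinders.integral_fRoof (hp0 : 0 < p) (hp1 : p < 1)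
    [IsProbabilityMeasure m] (hm : HasBernoulliCylinders p m) (hg0 : ∀ k, 0 < g k) {C : ℝ}
    (hg : ∀ k, g k ≤ C) :
    ∫ u, fRoof g u ∂m
      = p * g 0 + (1 - p) * (p * (2 - p)) * ∑' k, g (k + 1) * ((1 - p) ^ 2) ^ k := by
  have hgabs : ∀ k, |g k| ≤ C := fun k => by rw [abs_of_pos (hg0 k)]; exact hg k
  have h1 : ∫ u, fRoof g u ∂m = ∫ u, g (kabs u) ∂m := by
    refine integral_congr_ae ?_
    have : ∀ᵐ u ∂m, u ≠ zeroSeq := by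
      rw [ae_iff]; simpa using hm.measure_zeroSeq hp0 hp1
    filter_upwards [this] with u hu
    rw [fRoof, if_neg hu]
  have := Measure.isProbabilityMeasure_map (μ := m) measurable_kabs.aemeasurable
  have h_int : Integrable g (m.map kabs) :=
    Integrable.of_bound (measurable_from_nat).aestronglyMeasurable C (ae_of_all _ hgabs)
  have hval : ∀ k, (m.map kabs).real {k} = m.real {u | kabs u = k} := fun k =>
    map_measureReal_apply measurable_kabs (measurableSet_singleton k)
  have hq0 : (0 : ℝ) ≤ (1 - p) ^ 2 := sq_nonneg _
  have hq1 : (1 - p) ^ 2 < 1 := by nlinarith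
  have hterm : ∀ k, (m.map kabs).real {k + 1} • g (k + 1)
      = (1 - p) * (p * (2 - p)) * (g (k + 1) * ((1 - p) ^ 2) ^ k) := by
    intro k
    rw [hval, hm.measureReal_kabs_succ hp1, smul_eq_mul, ← pow_mul]
    ring
  have hsum : Summable fun k => (m.map kabs).real {k} • g k := by
    rw [← summable_nat_add_iff 1]
    simp only [hterm]
    exact (summable_mul_pow_of_bounded (fun k => hgabs (k + 1)) hq0 hq1).mul_left _
  rw [h1, ← integral_map measurable_kabs.aemeasurable h_int.aestronglyMeasurable,
    integral_countable h_int, hsum.tsum_eq_zero_add, hval, hm.measureReal_kabs_zero hp0 hp1]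
  simp only [hterm]
  rw [tsum_mul_left, smul_eq_mul]

lemma tsum_pow_div_succ {q : ℝ} (hq0 : 0 < q) (hq1 : q < 1) :
    HasSum (fun k : ℕ => 1 / ((k : ℝ) + 1) * q ^ k) (-Real.log (1 - q) / q) := by
  have h := (Real.hasSum_pow_div_log_of_abs_lt_one (x := q)
    (by rw [abs_of_pos hq0]; exact hq1)).div_const q
  refine h.congr_fun fun k => ?_
  rw [pow_succ]
  field_simp

/-- An Abelian theorem: if `k a_k → l` then `∑ a_k q ^ k` grows like `l` times the logarithm. -/
lemma tendsto_tsum_mul_pow_div_log {l : ℝ} (hgabs : ∃ C, ∀ k, |g k| ≤ C)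
    (hkg : Tendsto (fun k : ℕ => (k : ℝ) * g k) atTop (𝓝 l)) :
    Tendsto (fun q => (∑' k, g (k + 1) * q ^ k) / (-Real.log (1 - q) / q)) (𝓝[<] 1) (𝓝 l) := by
  obtain ⟨C, hC⟩ := hgabs
  have hL : Tendsto (fun q : ℝ => -Real.log (1 - q) / q) (𝓝[<] 1) atTop := by
    have h1 : Tendsto (fun q : ℝ => 1 - q) (𝓝[<] 1) (𝓝[>] 0) := by
      refine tendsto_nhdsWithin_iff.2 ⟨?_, ?_⟩
      · have : Tendsto (fun q : ℝ => 1 - q) (𝓝 1) (𝓝 (1 - 1)) := (continuous_const.sub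
          continuous_id).tendsto _
        rw [sub_self] at this
        exact this.mono_left nhdsWithin_le_nhds
      · filter_upwards [self_mem_nhdsWithin] with q hq
        simpa using hq
    have h2 : Tendsto (fun q : ℝ => -Real.log (1 - q)) (𝓝[<] 1) atTop :=
      tendsto_neg_atBot_atTop.comp (Real.tendsto_log_nhdsGT_zero.comp h1)
    have h3 : Tendsto (fun q : ℝ => q⁻¹) (𝓝[<] 1) (𝓝 1) := by
      have : Tendsto (fun q : ℝ => q⁻¹) (𝓝 1) (𝓝 1⁻¹) := tendsto_inv₀ one_ne_zero
      rw [inv_one] at this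
      exact this.mono_left nhdsWithin_le_nhds
    exact h2.atTop_mul_pos one_pos h3
  have hloc : ∀ᶠ q : ℝ in 𝓝[<] 1, 0 < q ∧ q < 1 :=
    Ioo_mem_nhdsLT zero_lt_one
  rw [Metric.tendsto_nhds]
  intro ε hε
  have hshift : Tendsto (fun k : ℕ => ((k + 1 : ℕ) : ℝ) * g (k + 1)) atTop (𝓝 l) :=
    (tendsto_add_atTop_iff_nat (f := fun k : ℕ => (k : ℝ) * g k) 1).2 hkg
  obtain ⟨K, hK⟩ := (Metric.tendsto_atTop.1 hshift) (ε / 2) (by positivity)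
  set B := ∑ k ∈ Finset.range K, |g (k + 1) - l / ((k : ℝ) + 1)| with hB
  filter_upwards [hloc, hL.eventually_gt_atTop (2 * B / ε), hL.eventually_gt_atTop 0]
    with q ⟨hq0, hq1⟩ hLB hL0
  set L := -Real.log (1 - q) / q with hLdef
  have hs := tsum_pow_div_succ hq0 hq1
  have hA := (summable_mul_pow_of_bounded (fun k => hC (k + 1)) hq0.le hq1).hasSum
  set A := ∑' k, g (k + 1) * q ^ k with hAdef
  have hdiff := hA.sub (hs.mul_left l)
  have hbound : |A - l * L| ≤ B + ε / 2 * L := by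
    have hfin : HasSum (fun k => if k < K then |g (k + 1) - l / ((k : ℝ) + 1)| else 0) B := by
      rw [hB, Finset.sum_congr rfl fun k hk => (if_pos (Finset.mem_range.1 hk)).symm]
      exact hasSum_sum_of_ne_finset_zero fun k hk => if_neg (by simpa using hk)
    have hmaj := hfin.add (hs.mul_left (ε / 2))
    have := tsum_of_norm_bounded hmaj (f := fun k => g (k + 1) * q ^ k
      - l * (1 / ((k : ℝ) + 1) * q ^ k)) fun k => ?_
    · rwa [hdiff.tsum_eq] at this
    · have hk1 : (0 : ℝ) < (k : ℝ) + 1 := by positivity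
      have hqk := pow_pos hq0 k
      have e : g (k + 1) * q ^ k - l * (1 / ((k : ℝ) + 1) * q ^ k)
          = (g (k + 1) - l / ((k : ℝ) + 1)) * q ^ k := by ring
      rw [e, Real.norm_eq_abs, abs_mul, abs_of_pos hqk]
      split_ifs with hkK
      · have : |g (k + 1) - l / ((k : ℝ) + 1)| * q ^ k ≤ |g (k + 1) - l / ((k : ℝ) + 1)| :=
          mul_le_of_le_one_right (abs_nonneg _) (pow_le_one₀ hq0.le hq1.le)
        have : 0 ≤ ε / 2 * (1 / ((k : ℝ) + 1) * q ^ k) := by positivity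
        linarith
      · rw [zero_add, ← mul_assoc]
        refine mul_le_mul_of_nonneg_right ?_ hqk.le
        have := (hK k (by omega)).le
        rw [Real.dist_eq] at this
        have e2 : g (k + 1) - l / ((k : ℝ) + 1)
            = (((k + 1 : ℕ) : ℝ) * g (k + 1) - l) / ((k : ℝ) + 1) := by
          push_cast
          field_simp
        rw [e2, abs_div, abs_of_pos hk1, mul_one_div]
        gcongr
  rw [Real.dist_eq]
  have e3 : A / L - l = (A - l * L) / L := by field_simp
  rw [e3, abs_div, abs_of_pos hL0, div_lt_iff₀ hL0]
  rw [div_lt_iff₀ hε] at hLB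
  linarith

/-- The mean roof height is asymptotic to `-2 l p log p`. -/
lemma tendsto_integral_fRoof_div {l : ℝ} (hg0 : ∀ k, 0 < g k) {C : ℝ} (hg : ∀ k, g k ≤ C)
    (hkg : Tendsto (fun k : ℕ => (k : ℝ) * g k) atTop (𝓝 l)) {μ : ℝ → Measure BSeq}
    (hprob : ∀ p, IsProbabilityMeasure (μ p))
    (hber : ∀ p, 0 < p → p < 1 → HasBernoulliCylinders p (μ p)) :
    Tendsto (fun p => (∫ u, fRoof g u ∂(μ p)) / (-(p * Real.log p))) (𝓝[>] (0 : ℝ))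
      (𝓝 (2 * l)) := by
  have hgabs : ∀ k, |g k| ≤ C := fun k => by rw [abs_of_pos (hg0 k)]; exact hg k
  have hloc : ∀ᶠ p : ℝ in 𝓝[>] 0, 0 < p ∧ p < 1 := Ioo_mem_nhdsGT zero_lt_one
  have hlog : Tendsto (fun p : ℝ => (Real.log p)⁻¹) (𝓝[>] 0) (𝓝 0) :=
    tendsto_inv_atBot_zero.comp Real.tendsto_log_nhdsGT_zero
  have hq : Tendsto (fun p : ℝ => (1 - p) ^ 2) (𝓝[>] 0) (𝓝[<] 1) := by
    refine tendsto_nhdsWithin_iff.2 ⟨?_, ?_⟩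
    · have : Tendsto (fun p : ℝ => (1 - p) ^ 2) (𝓝 0) (𝓝 ((1 - 0) ^ 2)) :=
        Continuous.tendsto (by fun_prop) _
      norm_num at this
      exact this.mono_left nhdsWithin_le_nhds
    · filter_upwards [hloc] with p hp
      simp only [Set.mem_Iio]
      nlinarith [hp.1, hp.2]
  have hA := (tendsto_tsum_mul_pow_div_log ⟨C, hgabs⟩ hkg).comp hq
  have hc : ∀ {F : ℝ → ℝ} {a : ℝ}, ContinuousAt F 0 → F 0 = a → Tendsto F (𝓝[>] 0) (𝓝 a) := by
    rintro F a hF rfl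
    exact hF.tendsto.mono_left nhdsWithin_le_nhds
  have h2p : Tendsto (fun p : ℝ => Real.log (2 - p)) (𝓝[>] 0) (𝓝 (Real.log 2)) := by
    refine hc (ContinuousAt.log (by fun_prop) (by norm_num)) (by norm_num)
  have hmain : Tendsto (fun p : ℝ => -(g 0 * (Real.log p)⁻¹)
      + (2 - p) / (1 - p) * (((∑' k, g (k + 1) * ((1 - p) ^ 2) ^ k)
        / (-Real.log (1 - (1 - p) ^ 2) / (1 - p) ^ 2))
        * (1 + Real.log (2 - p) * (Real.log p)⁻¹))) (𝓝[>] 0)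
      (𝓝 (-(g 0 * 0) + 2 * (l * (1 + Real.log 2 * 0)))) := by
    refine (hlog.const_mul _).neg.add (Tendsto.mul ?_ (hA.mul ((h2p.mul hlog).const_add 1)))
    refine hc (ContinuousAt.div (by fun_prop) (by fun_prop) (by norm_num)) (by norm_num)
  have e : -(g 0 * 0) + 2 * (l * (1 + Real.log 2 * 0)) = 2 * l := by ring
  rw [e] at hmain
  refine hmain.congr' ?_
  filter_upwards [hloc] with p ⟨hp0, hp1⟩
  have := hprob p
  rw [(hber p hp0 hp1).integral_fRoof hp0 hp1 hg0 hg]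
  set A := ∑' k, g (k + 1) * ((1 - p) ^ 2) ^ k
  have e1 : 1 - (1 - p) ^ 2 = p * (2 - p) := by ring
  rw [e1]
  have hne : Real.log p ≠ 0 := (Real.log_neg hp0 hp1).ne
  have hne2 : Real.log (p * (2 - p)) ≠ 0 :=
    (Real.log_neg (by nlinarith) (by nlinarith)).ne
  have e2 : 1 + Real.log (2 - p) * (Real.log p)⁻¹ = Real.log (p * (2 - p)) / Real.log p := by
    rw [Real.log_mul hp0.ne' (by linarith)]
    field_simp
  rw [e2]
  have h1p : 1 - p ≠ 0 := by linarith
  field_simp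
  ring

lemma tendsto_bernoulliEntropy_div :
    Tendsto (fun p : ℝ => (-p * Real.log p - (1 - p) * Real.log (1 - p)) / (-(p * Real.log p)))
      (𝓝[>] (0 : ℝ)) (𝓝 1) := by
  have hloc : ∀ᶠ p : ℝ in 𝓝[>] 0, 0 < p ∧ p < 1 := Ioo_mem_nhdsGT zero_lt_one
  have hlog : Tendsto (fun p : ℝ => (Real.log p)⁻¹) (𝓝[>] 0) (𝓝 0) :=
    tendsto_inv_atBot_zero.comp Real.tendsto_log_nhdsGT_zero
  have hd : HasDerivAt (fun p : ℝ => (1 - p) * Real.log (1 - p)) (-1) 0 := by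
    have h1 : HasDerivAt (fun p : ℝ => 1 - p) (-1) 0 := by
      simpa using (hasDerivAt_id (0 : ℝ)).const_sub 1
    simpa using h1.fun_mul (h1.log (by norm_num))
  have hs := hd.tendsto_slope.mono_left (nhdsWithin_mono 0 fun x (hx : 0 < x) => hx.ne')
  have := (hs.mul hlog).const_add 1
  rw [mul_zero, add_zero] at this
  refine this.congr' ?_
  filter_upwards [hloc] with p ⟨hp0, hp1⟩
  have hne : Real.log p ≠ 0 := (Real.log_neg hp0 hp1).ne
  simp only [slope_def_field, sub_zero, Real.log_one, mul_zero]
  field_simp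
  ring

end Asymptotics

section Suspension

variable {f : BSeq → ℝ} {m : Measure BSeq}

/-- The fundamental domain `{(u, s) | 0 ≤ s < f u}` of the suspension. -/
def suspDom (f : BSeq → ℝ) : Set (BSeq × ℝ) := {z | 0 ≤ z.2 ∧ z.2 < f z.1}

/-- The deck transformation `(u, s) ↦ (σ u, s - f u)`. -/
def suspStep (f : BSeq → ℝ) (z : BSeq × ℝ) : BSeq × ℝ := (shiftMap z.1, z.2 - f z.1)

/-- The inverse of the deck transformation. -/
def suspBack (f : BSeq → ℝ) (z : BSeq × ℝ) : BSeq × ℝ :=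
  (shiftBy (-1) z.1, z.2 + f (shiftBy (-1) z.1))

/-- Translation in the second coordinate. -/
def vert (t : ℝ) (z : BSeq × ℝ) : BSeq × ℝ := (z.1, z.2 + t)

/-- The Birkhoff sums of `f` under the shift. -/
noncomputable def roofSum (f : BSeq → ℝ) (j : ℕ) (u : BSeq) : ℝ :=
  ∑ i ∈ Finset.range j, f (shiftBy i u)

/-- The normalised restriction of `m × Leb` to the fundamental domain. -/
noncomputable def domMeasure (f : BSeq → ℝ) (m : Measure BSeq) : Measure (BSeq × ℝ) :=
  (ENNReal.ofReal (∫ x, f x ∂m))⁻¹ • (m.prod volume).restrict (suspDom f)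

/-- The itinerary of length `n` of the unit translation with respect to `P`. -/
def nameMap {β : Type*} (P : BSeq × ℝ → β) (n : ℕ) (z : BSeq × ℝ) : Fin n → β :=
  fun i => P (vert i z)

lemma shiftBy_zero (u : BSeq) : shiftBy 0 u = u := by
  funext n; simp [shiftBy]

lemma shiftBy_apply_zero (j : ℤ) (u : BSeq) : shiftBy j u 0 = u j := by
  simp [shiftBy]

lemma roofSum_zero (u : BSeq) : roofSum f 0 u = 0 := rfl

lemma roofSum_succ (j : ℕ) (u : BSeq) : roofSum f (j + 1) u = roofSum f j u + f (shiftBy j u) :=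
  Finset.sum_range_succ _ _

lemma roofSum_one (u : BSeq) : roofSum f 1 u = f u := by
  rw [roofSum_succ, roofSum_zero, zero_add, Nat.cast_zero, shiftBy_zero]

lemma roofSum_add (j k : ℕ) (u : BSeq) :
    roofSum f (j + k) u = roofSum f j u + roofSum f k (shiftBy j u) := by
  simp only [roofSum, Finset.sum_range_add, shiftBy_shiftBy]
  congr 1
  refine Finset.sum_congr rfl fun i _ => ?_
  congr 2
  push_cast
  ring

lemma monotone_roofSum (hf0 : ∀ u, 0 ≤ f u) (u : BSeq) : Monotone fun j => roofSum f j u := by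
  refine monotone_nat_of_le_succ fun j => ?_
  rw [roofSum_succ]
  linarith [hf0 (shiftBy j u)]

lemma measurable_roofSum (hfm : Measurable f) (j : ℕ) : Measurable (roofSum f j) :=
  Finset.measurable_fun_sum _ fun i _ => hfm.comp (measurable_shiftBy i)

lemma suspStep_iterate (j : ℕ) (z : BSeq × ℝ) :
    (suspStep f)^[j] z = (shiftBy j z.1, z.2 - roofSum f j z.1) := by
  induction j with
  | zero => simp [shiftBy_zero, roofSum_zero]
  | succ j ih =>
    rw [Function.iterate_succ_apply', ih, suspStep, shiftMap_eq_shiftBy, shiftBy_shiftBy,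
      roofSum_succ]
    push_cast
    rw [add_comm (1 : ℤ), sub_sub]

lemma suspStep_vert (t : ℝ) (z : BSeq × ℝ) : suspStep f (vert t z) = vert t (suspStep f z) := by
  simp only [suspStep, vert]
  rw [add_sub_right_comm]

lemma suspStep_iterate_vert (j : ℕ) (t : ℝ) (z : BSeq × ℝ) :
    (suspStep f)^[j] (vert t z) = vert t ((suspStep f)^[j] z) :=
  Function.Commute.iterate_left (fun z => suspStep_vert t z) j z

lemma suspBack_suspStep (z : BSeq × ℝ) : suspBack f (suspStep f z) = z := by
  simp [suspBack, suspStep, shiftMap_eq_shiftBy, shiftBy_shiftBy, shiftBy_zero]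

lemma suspStep_suspBack (z : BSeq × ℝ) : suspStep f (suspBack f z) = z := by
  simp [suspBack, suspStep, shiftMap_eq_shiftBy, shiftBy_shiftBy, shiftBy_zero]

lemma suspStep_iterate_suspBack_iterate (j : ℕ) (z : BSeq × ℝ) :
    (suspStep f)^[j] ((suspBack f)^[j] z) = z :=
  Function.LeftInverse.iterate (g := suspStep f) (f := suspBack f) suspStep_suspBack j z

lemma measurable_suspStep (hfm : Measurable f) : Measurable (suspStep f) :=
  ((measurable_shiftBy 1).comp measurable_fst).prodMk
    (measurable_snd.sub (hfm.comp measurable_fst))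

lemma measurable_suspBack (hfm : Measurable f) : Measurable (suspBack f) :=
  ((measurable_shiftBy (-1)).comp measurable_fst).prodMk
    (measurable_snd.add (hfm.comp ((measurable_shiftBy (-1)).comp measurable_fst)))

lemma measurable_vert (t : ℝ) : Measurable (vert t) :=
  measurable_fst.prodMk (measurable_snd.add_const t)

lemma measurableSet_suspDom (hfm : Measurable f) : MeasurableSet (suspDom f) :=
  (measurableSet_le measurable_const measurable_snd).inter
    (measurableSet_lt measurable_snd (hfm.comp measurable_fst))

lemma suspStep_iterate_notMem (hf0 : ∀ u, 0 ≤ f u) {z : BSeq × ℝ} (hz : z ∈ suspDom f) {k : ℕ}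
    (hk : 0 < k) : (suspStep f)^[k] z ∉ suspDom f := by
  rw [suspStep_iterate]
  rintro ⟨h, -⟩
  have h1 := monotone_roofSum hf0 z.1 (show 1 ≤ k from hk)
  simp only [roofSum_one] at h1 h
  linarith [hz.2]

lemma measurePreserving_suspBack [SFinite m] (hfm : Measurable f)
    (hm : MeasurePreserving (shiftBy (-1)) m m) :
    MeasurePreserving (suspBack f) (m.prod volume) (m.prod volume) :=
  hm.skew_product (g := fun u s => s + f (shiftBy (-1) u))
    (measurable_snd.add (hfm.comp ((measurable_shiftBy (-1)).comp measurable_fst)))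
    (ae_of_all _ fun _ => map_add_right_eq_self _ _)

lemma measurePreserving_vert [SFinite m] (t : ℝ) :
    MeasurePreserving (vert t) (m.prod volume) (m.prod volume) :=
  (MeasurePreserving.id m).skew_product (g := fun _ s => s + t)
    (measurable_snd.add_const t) (ae_of_all _ fun _ => map_add_right_eq_self _ _)

/-- The lifts of the points of the fundamental domain meet a set with total measure at most the
measure of that set. -/
lemma tsum_measure_dom_inter_le [SFinite m] (hf0 : ∀ u, 0 ≤ f u) (hfm : Measurable f)
    (hm : MeasurePreserving (shiftBy (-1)) m m) (t : ℝ) {B : Set (BSeq × ℝ)}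
    (hB : MeasurableSet B) :
    ∑' j : ℕ, m.prod volume (suspDom f ∩ {z | (suspStep f)^[j] (vert t z) ∈ B})
      ≤ m.prod volume B := by
  have hD := measurableSet_suspDom hfm
  have hback := measurePreserving_suspBack hfm hm
  have hvB : MeasurableSet (vert t ⁻¹' B) := measurable_vert t hB
  have h1 : ∀ j : ℕ, m.prod volume (suspDom f ∩ {z | (suspStep f)^[j] (vert t z) ∈ B})
      = m.prod volume ((suspBack f)^[j] ⁻¹' suspDom f ∩ vert t ⁻¹' B) := by
    intro j
    have hset : MeasurableSet (suspDom f ∩ {z | (suspStep f)^[j] (vert t z) ∈ B}) :=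
      hD.inter (((measurable_suspStep hfm).iterate j).comp (measurable_vert t) hB)
    rw [← (hback.iterate j).measure_preimage hset.nullMeasurableSet]
    congr 1
    ext z
    simp only [Set.mem_preimage, Set.mem_inter_iff, Set.mem_ofPred_eq, suspStep_iterate_vert,
      suspStep_iterate_suspBack_iterate]
  simp only [h1]
  rw [← measure_iUnion]
  · rw [← (measurePreserving_vert (m := m) t).measure_preimage hB.nullMeasurableSet]
    exact measure_mono (Set.iUnion_subset fun j => Set.inter_subset_right)
  · refine (pairwise_disjoint_on _).2 fun i j hij => ?_
    rw [Set.disjoint_left]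
    rintro z ⟨hi, -⟩ ⟨hj, -⟩
    obtain ⟨k, rfl⟩ := Nat.exists_eq_add_of_lt hij
    refine suspStep_iterate_notMem hf0 hj (Nat.succ_pos k) ?_
    rw [add_assoc, add_comm, Function.iterate_add_apply, suspStep_iterate_suspBack_iterate]
    exact hi
  · exact fun j => (((measurable_suspBack hfm).iterate j) hD).inter hvB

lemma measure_suspDom [IsProbabilityMeasure m] (hf0 : ∀ u, 0 ≤ f u) (hfm : Measurable f)
    (h_int : Integrable f m) : m.prod volume (suspDom f) = ENNReal.ofReal (∫ u, f u ∂m) := by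
  rw [Measure.prod_apply (measurableSet_suspDom hfm),
    ofReal_integral_eq_lintegral_ofReal h_int (ae_of_all _ hf0)]
  refine lintegral_congr fun u => ?_
  have : Prod.mk u ⁻¹' suspDom f = Set.Ico 0 (f u) := rfl
  rw [this, Real.volume_Ico, sub_zero]

lemma isProbabilityMeasure_domMeasure [IsProbabilityMeasure m] (hf0 : ∀ u, 0 ≤ f u)
    (hfm : Measurable f) (h_int : Integrable f m) (hc : 0 < ∫ u, f u ∂m) :
    IsProbabilityMeasure (domMeasure f m) := by
  refine ⟨?_⟩
  rw [domMeasure, Measure.smul_apply, Measure.restrict_apply_univ, measure_suspDom hf0 hfm h_int,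
    smul_eq_mul, ENNReal.inv_mul_cancel (by simpa using hc) ENNReal.ofReal_ne_top]

lemma domMeasure_compl_suspDom (hfm : Measurable f) : domMeasure f m (suspDom f)ᶜ = 0 := by
  rw [domMeasure, Measure.smul_apply, Measure.restrict_apply (measurableSet_suspDom hfm).compl]
  simp

lemma domMeasure_apply (hfm : Measurable f) (A : Set (BSeq × ℝ)) :
    domMeasure f m A = (ENNReal.ofReal (∫ x, f x ∂m))⁻¹ * m.prod volume (A ∩ suspDom f) := by
  rw [domMeasure, Measure.smul_apply, Measure.restrict_apply' (measurableSet_suspDom hfm),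
    smul_eq_mul]

lemma domMeasure_fst_le [IsProbabilityMeasure m] (hfm : Measurable f) (hc : 0 < ∫ u, f u ∂m)
    {C : ℝ} (hfC : ∀ u, f u ≤ C) (E : Set BSeq) :
    domMeasure f m (Prod.fst ⁻¹' E) ≤ ENNReal.ofReal (C / ∫ u, f u ∂m) * m E := by
  have h1 : Prod.fst ⁻¹' E ∩ suspDom f ⊆ E ×ˢ Set.Icc 0 C := fun z hz =>
    ⟨hz.1, hz.2.1, hz.2.2.le.trans (hfC _)⟩
  rw [domMeasure_apply hfm]
  calc _ ≤ (ENNReal.ofReal (∫ x, f x ∂m))⁻¹ * (m E * ENNReal.ofReal C) := by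
        gcongr
        refine (measure_mono h1).trans_eq ?_
        rw [Measure.prod_prod, Real.volume_Icc, sub_zero]
    _ = _ := by
        rw [div_eq_mul_inv, ENNReal.ofReal_mul' (inv_nonneg.2 hc.le), ENNReal.ofReal_inv_of_pos hc]
        ring

lemma measurable_suspFlow {X : Type*} [MeasurableSpace X] (T : X → X) (F : X → ℝ) (t : ℝ) :
    Measurable (suspFlow T F t) := fun s hs => by
  change MeasurableSet (Quot.mk (suspRel T F) ⁻¹' (suspFlow T F t ⁻¹' s))
  have h1 : MeasurableSet (Quot.mk (suspRel T F) ⁻¹' s) := hs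
  exact (measurable_fst.prodMk (measurable_snd.add_const t)) h1

lemma suspFlow_iterate_mk {X : Type*} (T : X → X) (F : X → ℝ) (i : ℕ) (z : X × ℝ) :
    (suspFlow T F 1)^[i] (Quot.mk _ z) = Quot.mk _ (z.1, z.2 + i) := by
  induction i with
  | zero => simp
  | succ i ih =>
    rw [Function.iterate_succ_apply', ih]
    change Quot.mk _ (z.1, z.2 + i + 1) = _
    push_cast
    rw [add_assoc]

lemma measurable_suspMk {X : Type*} [MeasurableSpace X] (T : X → X) (F : X → ℝ) :
    Measurable (Quot.mk (suspRel T F)) := fun _ hs => hs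

lemma obsEntropy_suspFlow {k : ℕ} {P : SuspSpace shiftMap f → Fin k} (hP : Measurable P) :
    obsEntropy (suspFlow shiftMap f 1) (suspMeasure shiftMap f m) P
      = liminf (fun n : ℕ => ENNReal.ofReal (shannonEnt
          ((domMeasure f m).map (nameMap (fun z => P (Quot.mk _ z)) n)) / n)) atTop := by
  have h : ∀ n : ℕ, (suspMeasure shiftMap f m).map
      (fun x => fun i : Fin n => P ((suspFlow shiftMap f 1)^[(i : ℕ)] x))
      = (domMeasure f m).map (nameMap (fun z => P (Quot.mk _ z)) n) := by
    intro n
    have hQ : Measurable fun x => fun i : Fin n => P ((suspFlow shiftMap f 1)^[(i : ℕ)] x) :=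
      measurable_pi_lambda _ fun i => hP.comp ((measurable_suspFlow _ _ 1).iterate i)
    rw [suspMeasure, domMeasure, Measure.map_smul, Measure.map_smul,
      Measure.map_map hQ (measurable_suspMk _ _)]
    congr 2
    funext z i
    simp only [Function.comp, suspFlow_iterate_mk, nameMap, vert]
  simp only [obsEntropy, h]

end Suspension

section LargeNumbers

variable {f : BSeq → ℝ} {p : ℝ} {m : Measure BSeq}

lemma natCast_image_card (M : ℕ) : ((Finset.range M).map Nat.castEmbedding : Finset ℤ).card = M := by
  rw [Finset.card_map, Finset.card_range]

lemma HasBernoulliCylinders.eventually_roofSum_dev_le [IsProbabilityMeasure m] (hp0 : 0 < p)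
    (hp1 : p < 1) (hm : HasBernoulliCylinders p m) (hf : UnifLocal f) {ε δ : ℝ} (hε : 0 < ε)
    (hδ : 0 < δ) :
    ∀ᶠ M : ℕ in atTop, m {u | ε * M ≤ |roofSum f M u - M * ∫ u, f u ∂m|} ≤ ENNReal.ofReal δ := by
  obtain ⟨L, hL⟩ := hm.exists_measure_sum_ge_le hp0 hp1 hf hε hδ
  filter_upwards [eventually_ge_atTop L] with M hM
  have := hL ((Finset.range M).map Nat.castEmbedding) (by rwa [natCast_image_card])
  simpa only [natCast_image_card, Finset.sum_map, Nat.castEmbedding_apply, roofSum] using this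

lemma HasBernoulliCylinders.eventually_roofSum_le_le [IsProbabilityMeasure m] (hp0 : 0 < p)
    (hp1 : p < 1) (hm : HasBernoulliCylinders p m) (hf : UnifLocal f) (hc : 0 < ∫ u, f u ∂m)
    (A : ℝ) {δ : ℝ} (hδ : 0 < δ) :
    ∀ᶠ M : ℕ in atTop, m {u | roofSum f M u ≤ A} ≤ ENNReal.ofReal δ := by
  set c := ∫ u, f u ∂m
  have h2 : ∀ᶠ M : ℕ in atTop, A ≤ c / 2 * M :=
    (tendsto_natCast_atTop_atTop.const_mul_atTop (half_pos hc)).eventually_ge_atTop A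
  filter_upwards [hm.eventually_roofSum_dev_le hp0 hp1 hf (half_pos hc) hδ, h2] with M hM hA
  refine (measure_mono fun u hu => ?_).trans hM
  simp only [Set.mem_ofPred_eq] at hu ⊢
  rw [abs_sub_comm]
  refine le_trans ?_ (le_abs_self _)
  change c / 2 * M ≤ M * c - _
  linarith

lemma HasBernoulliCylinders.ae_exists_lt_roofSum [IsProbabilityMeasure m] (hp0 : 0 < p)
    (hp1 : p < 1) (hm : HasBernoulliCylinders p m) (hf : UnifLocal f) (hc : 0 < ∫ u, f u ∂m) :
    ∀ᵐ u ∂m, ∀ A : ℝ, ∃ j, A < roofSum f j u := by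
  have key : ∀ N : ℕ, ∀ᵐ u ∂m, ∃ j, (N : ℝ) < roofSum f j u := by
    intro N
    rw [ae_iff]
    refine le_antisymm (ENNReal.le_of_forall_pos_le_add fun δ hδ _ => ?_) zero_le
    obtain ⟨M, hM⟩ := (hm.eventually_roofSum_le_le hp0 hp1 hf hc N
      (NNReal.coe_pos.2 hδ)).exists
    rw [zero_add]
    rw [ENNReal.ofReal_coe_nnreal] at hM
    refine (measure_mono fun u hu => ?_).trans hM
    simp only [Set.mem_ofPred_eq, not_exists, not_lt] at hu ⊢
    exact hu M
  filter_upwards [ae_all_iff.2 key] with u hu A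
  obtain ⟨N, hN⟩ := exists_nat_gt A
  obtain ⟨j, hj⟩ := hu N
  exact ⟨j, hN.trans hj⟩

/-- The information content of a symbol. -/
noncomputable def symInfo (p : ℝ) (b : Bool) : ℝ := -Real.log (if b then p else 1 - p)

lemma exp_neg_symInfo (hp0 : 0 < p) (hp1 : p < 1) (b : Bool) :
    Real.exp (-symInfo p b) = if b then p else 1 - p := by
  rw [symInfo, neg_neg, Real.exp_log]
  split_ifs
  · exact hp0
  · linarith

lemma HasBernoulliCylinders.measure_cylinder (hp0 : 0 < p) (hp1 : p < 1)
    (hm : HasBernoulliCylinders p m) (s : Finset ℤ) (v : BSeq) :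
    m {u : BSeq | ∀ n ∈ s, u n = v n} = ENNReal.ofReal (Real.exp (-∑ n ∈ s, symInfo p (v n))) := by
  rw [hm, ← Finset.sum_neg_distrib, Real.exp_sum, ENNReal.ofReal_prod_of_nonneg
    fun _ _ => (Real.exp_pos _).le]
  simp only [exp_neg_symInfo hp0 hp1]

lemma HasBernoulliCylinders.integral_symInfo [IsProbabilityMeasure m] (hp0 : 0 < p)
    (hp1 : p < 1) (hm : HasBernoulliCylinders p m) :
    ∫ u, symInfo p (u 0) ∂m = -p * Real.log p - (1 - p) * Real.log (1 - p) := by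
  have hmeas : Measurable fun u : BSeq => u 0 := measurable_pi_apply 0
  have := Measure.isProbabilityMeasure_map (μ := m) hmeas.aemeasurable
  have hreal : ∀ b, (m.map fun u : BSeq => u 0).real {b} = if b then p else 1 - p := by
    intro b
    rw [map_measureReal_apply hmeas (measurableSet_singleton b)]
    have h := hm {0} fun _ => b
    simp only [Finset.mem_singleton, forall_eq, Finset.prod_singleton] at h
    rw [measureReal_def]
    refine (congrArg ENNReal.toReal h).trans (ENNReal.toReal_ofReal ?_)
    split_ifs <;> linarith
  rw [← integral_map (f := symInfo p) hmeas.aemeasurable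
    (measurable_of_finite _).aestronglyMeasurable, integral_fintype .of_finite]
  simp only [hreal, Fintype.sum_bool, symInfo, smul_eq_mul, if_true, Bool.false_eq_true, if_false]
  ring

lemma HasBernoulliCylinders.exists_measure_symInfo_ge_le [IsProbabilityMeasure m] (hp0 : 0 < p)
    (hp1 : p < 1) (hm : HasBernoulliCylinders p m) {ε δ : ℝ} (hε : 0 < ε) (hδ : 0 < δ) :
    ∃ L : ℕ, ∀ T : Finset ℤ, L ≤ T.card →
      m {u | ε * T.card ≤ |∑ j ∈ T, symInfo p (u j)
        - T.card * (-p * Real.log p - (1 - p) * Real.log (1 - p))|} ≤ ENNReal.ofReal δ := by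
  have h := hm.exists_measure_sum_ge_le hp0 hp1 (unifLocal_apply_zero (symInfo p)) hε hδ
  rw [hm.integral_symInfo hp0 hp1] at h
  simpa only [shiftBy_apply_zero] using h

/-- Markov's inequality for the number of visits to a set. -/
lemma measure_card_ge_le {Ω ι : Type*} [MeasurableSpace Ω] (ν : Measure Ω) (s : Finset ι)
    (A : ι → Set Ω) [∀ ω, DecidablePred fun i => ω ∈ A i] (hA : ∀ i ∈ s, MeasurableSet (A i))
    {a : ℝ} (ha : 0 < a) :
    ν {ω | a ≤ ((s.filter fun i => ω ∈ A i).card : ℝ)}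
      ≤ (∑ i ∈ s, ν (A i)) / ENNReal.ofReal a := by
  have h1 : ∀ ω, ∑ i ∈ s, (A i).indicator (fun _ => (1 : ℝ≥0∞)) ω
      = ((s.filter fun i => ω ∈ A i).card : ℝ≥0∞) := by
    intro ω
    rw [Finset.card_filter]
    push_cast
    exact Finset.sum_congr rfl fun i _ => by
      by_cases h : ω ∈ A i <;> simp [h]
  have h2 : ∫⁻ ω, ∑ i ∈ s, (A i).indicator (fun _ => (1 : ℝ≥0∞)) ω ∂ν = ∑ i ∈ s, ν (A i) := by
    rw [lintegral_finsetSum' _ fun i hi => (measurable_const.indicator (hA i hi)).aemeasurable]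
    exact Finset.sum_congr rfl fun i hi => lintegral_indicator_one (hA i hi)
  rw [← h2]
  refine le_trans (measure_mono fun ω hω => ?_) (meas_ge_le_lintegral_div
    (Finset.measurable_fun_sum s fun i hi =>
      measurable_const.indicator (hA i hi)).aemeasurable (by simpa using ha)
      ENNReal.ofReal_ne_top)
  simp only [Set.mem_ofPred_eq, h1] at hω ⊢
  rw [← ENNReal.ofReal_natCast]
  exact ENNReal.ofReal_le_ofReal hω

end LargeNumbers

section BlockObservable

variable {f : BSeq → ℝ}

/-- The points whose orbit under the deck transformation meets `B`. -/
def orbitHull (f : BSeq → ℝ) (B : Set (BSeq × ℝ)) : Set (BSeq × ℝ) :=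
  {z | ∃ n : ℕ, (suspStep f)^[n] z ∈ B ∨ (suspBack f)^[n] z ∈ B}

lemma suspStep_mem_orbitHull_iff {B : Set (BSeq × ℝ)} (z : BSeq × ℝ) :
    suspStep f z ∈ orbitHull f B ↔ z ∈ orbitHull f B := by
  constructor
  · rintro ⟨n, h | h⟩
    · exact ⟨n + 1, Or.inl h⟩
    · rcases n with _ | n
      · exact ⟨1, Or.inl h⟩
      · rw [Function.iterate_succ_apply, suspBack_suspStep] at h
        exact ⟨n, Or.inr h⟩
  · rintro ⟨n, h | h⟩
    · rcases n with _ | n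
      · exact ⟨1, Or.inr (by rwa [Function.iterate_one, suspBack_suspStep])⟩
      · exact ⟨n, Or.inl h⟩
    · exact ⟨n + 1, Or.inr (by rwa [Function.iterate_succ_apply, suspBack_suspStep])⟩

lemma mem_orbitHull_iff (hf0 : ∀ u, 0 ≤ f u) {B : Set (BSeq × ℝ)} (hB : B ⊆ suspDom f)
    {z : BSeq × ℝ} (hz : z ∈ suspDom f) : z ∈ orbitHull f B ↔ z ∈ B := by
  refine ⟨?_, fun h => ⟨0, Or.inl h⟩⟩
  rintro ⟨n, h | h⟩
  · rcases n with _ | n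
    · exact h
    · exact absurd (hB h) (suspStep_iterate_notMem hf0 hz n.succ_pos)
  · rcases n with _ | n
    · exact h
    · refine absurd ?_ (suspStep_iterate_notMem hf0 (hB h) n.succ_pos)
      rwa [suspStep_iterate_suspBack_iterate]

lemma measurableSet_orbitHull (hfm : Measurable f) {B : Set (BSeq × ℝ)} (hB : MeasurableSet B) :
    MeasurableSet (orbitHull f B) := by
  have : orbitHull f B = ⋃ n : ℕ, ((suspStep f)^[n] ⁻¹' B ∪ (suspBack f)^[n] ⁻¹' B) := by
    ext z
    simp [orbitHull]
  rw [this]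
  exact MeasurableSet.iUnion fun n => ((measurable_suspStep hfm).iterate n hB).union
    ((measurable_suspBack hfm).iterate n hB)

/-- The points of the fundamental domain that cross the roof more than `r` times within one unit of
time, and whose `r`-th symbol is `b`. -/
def crossSet (f : BSeq → ℝ) (r : ℕ) (b : Bool) : Set (BSeq × ℝ) :=
  {z | z ∈ suspDom f ∧ roofSum f (r + 1) z.1 ≤ z.2 + 1 ∧ z.1 r = b}

lemma measurableSet_crossSet (hfm : Measurable f) (r : ℕ) (b : Bool) :
    MeasurableSet (crossSet f r b) :=
  (measurableSet_suspDom hfm).inter ((measurableSet_le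
    ((measurable_roofSum hfm _).comp measurable_fst) (measurable_snd.add_const 1)).inter
    (measurableSet_eq_fun ((measurable_pi_apply (r : ℤ)).comp measurable_fst) measurable_const))

open Classical in
/-- The observable recording the first `K` symbols read during one unit of time. -/
noncomputable def blockObs (f : BSeq → ℝ) (K : ℕ) (z : BSeq × ℝ) : Fin K × Bool → Bool :=
  fun rb => decide (z ∈ orbitHull f (crossSet f rb.1 rb.2))

lemma blockObs_suspStep (K : ℕ) (z : BSeq × ℝ) :
    blockObs f K (suspStep f z) = blockObs f K z := by
  funext rb
  exact decide_eq_decide.2 (suspStep_mem_orbitHull_iff z)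

lemma blockObs_suspStep_iterate (K j : ℕ) (z : BSeq × ℝ) :
    blockObs f K ((suspStep f)^[j] z) = blockObs f K z := by
  induction j with
  | zero => rfl
  | succ j ih => rw [Function.iterate_succ_apply', blockObs_suspStep, ih]

lemma measurable_blockObs (hfm : Measurable f) (K : ℕ) : Measurable (blockObs f K) :=
  measurable_pi_lambda _ fun rb => measurable_to_bool (by
    have : (fun z => blockObs f K z rb) ⁻¹' {true} = orbitHull f (crossSet f rb.1 rb.2) := by
      ext z
      simp [blockObs]
    rw [this]
    exact measurableSet_orbitHull hfm (measurableSet_crossSet hfm _ _))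

lemma exists_suspSpace_observable (hfm : Measurable f) (K : ℕ) :
    ∃ (k : ℕ) (P : SuspSpace shiftMap f → Fin k), Measurable P ∧
      ∀ z z', P (Quot.mk _ z) = P (Quot.mk _ z') → blockObs f K z = blockObs f K z' := by
  let e := Fintype.equivFin (Fin K × Bool → Bool)
  refine ⟨_, Quot.lift (fun z => e (blockObs f K z)) ?_, ?_, fun z z' h => e.injective h⟩
  · rintro z w rfl
    exact congrArg e (blockObs_suspStep K z).symm
  · intro s hs
    exact (measurable_of_finite e).comp (measurable_blockObs hfm K) hs

/-- The number of roof crossings of the orbit of `z` up to time `i`. -/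
noncomputable def crossings (f : BSeq → ℝ) (z : BSeq × ℝ) (i : ℕ) : ℕ :=
  crossIdx (fun j => roofSum f j z.1) (z.2 + i)

/-- The points of the fundamental domain over sequences with unbounded Birkhoff sums. -/
def recurDom (f : BSeq → ℝ) : Set (BSeq × ℝ) :=
  {z | z ∈ suspDom f ∧ ∀ A, ∃ j, A < roofSum f j z.1}

lemma crossings_spec (hf0 : ∀ u, 0 ≤ f u) {z : BSeq × ℝ} (hz : z ∈ recurDom f) (i : ℕ) :
    roofSum f (crossings f z i) z.1 ≤ z.2 + i ∧ z.2 + i < roofSum f (crossings f z i + 1) z.1 :=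
  crossIdx_spec (monotone_roofSum hf0 z.1) (hz.2 _) (by
    simp only [roofSum_zero]
    have := hz.1.1
    positivity)

lemma lt_crossings_iff (hf0 : ∀ u, 0 ≤ f u) {z : BSeq × ℝ} (hz : z ∈ recurDom f) (i j : ℕ) :
    j < crossings f z i ↔ roofSum f (j + 1) z.1 ≤ z.2 + i :=
  lt_crossIdx_iff (monotone_roofSum hf0 z.1) (hz.2 _) j

lemma crossings_zero (hf0 : ∀ u, 0 ≤ f u) {z : BSeq × ℝ} (hz : z ∈ recurDom f) :
    crossings f z 0 = 0 := by
  by_contra h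
  have := (lt_crossings_iff hf0 hz 0 0).1 (Nat.pos_of_ne_zero h)
  rw [zero_add, roofSum_one, Nat.cast_zero, add_zero] at this
  exact absurd hz.1.2 (not_lt.2 this)

lemma monotone_crossings (hf0 : ∀ u, 0 ≤ f u) {z : BSeq × ℝ} (hz : z ∈ recurDom f) :
    Monotone (crossings f z) := by
  refine fun i i' hi => ?_
  by_contra! h
  have h1 := (lt_crossings_iff hf0 hz i _).1 h
  have : (i : ℝ) ≤ i' := by exact_mod_cast hi
  exact lt_irrefl _ ((lt_crossings_iff hf0 hz i' _).2 (h1.trans (by linarith)))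

lemma blockObs_vert (hf0 : ∀ u, 0 ≤ f u) {z : BSeq × ℝ} (hz : z ∈ recurDom f) {K : ℕ} (i : ℕ)
    (r : Fin K) (b : Bool) : blockObs f K (vert i z) (r, b) = true ↔
      crossings f z i + r < crossings f z (i + 1) ∧ z.1 ((crossings f z i + r : ℕ) : ℤ) = b := by
  set N := crossings f z i with hN
  obtain ⟨h1, h2⟩ := crossings_spec hf0 hz i
  rw [← hN] at h1 h2
  rw [← blockObs_suspStep_iterate K N]
  have hD : (suspStep f)^[N] (vert i z) ∈ suspDom f := by
    rw [suspStep_iterate]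
    rw [roofSum_succ] at h2
    simp only [suspDom, vert, Set.mem_ofPred_eq]
    exact ⟨by linarith, by linarith⟩
  simp only [blockObs, decide_eq_true_eq]
  rw [mem_orbitHull_iff hf0 (fun w hw => hw.1) hD, lt_crossings_iff hf0 hz]
  simp only [crossSet, Set.mem_ofPred_eq, hD, true_and]
  rw [suspStep_iterate]
  simp only [vert, shiftBy]
  rw [add_assoc N, roofSum_add N]
  push_cast
  rw [add_comm (r : ℤ)]
  refine and_congr_left fun _ => ?_
  constructor <;> intro h <;> linarith

open Classical in
/-- The symbols that are not among the first `K` read in their unit of time. -/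
noncomputable def lostWord (f : BSeq → ℝ) (K M : ℕ) (z : BSeq × ℝ) : Fin M → Option Bool :=
  fun j => if ∃ i, crossings f z i + K ≤ j ∧ (j : ℕ) < crossings f z (i + 1) then
    some (z.1 ((j : ℕ) : ℤ)) else none

lemma word_eq_of_nameMap_eq (hf0 : ∀ u, 0 ≤ f u) {K M n : ℕ} (hK : 0 < K) {z z' : BSeq × ℝ}
    (hz : z ∈ recurDom f) (hz' : z' ∈ recurDom f) (hM : M ≤ crossings f z n)
    (hname : nameMap (blockObs f K) n z = nameMap (blockObs f K) n z')
    (hlost : lostWord f K M z = lostWord f K M z') :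
    ∀ j : ℕ, j < M → z.1 j = z'.1 j := by
  refine word_eq_of_blocks (x := fun j => z.1 j) (x' := fun j => z'.1 j) (K := K)
    (monotone_crossings hf0 hz) (monotone_crossings hf0 hz') (crossings_zero hf0 hz)
    (crossings_zero hf0 hz') hK hM (fun i hi r hr b => ?_) (fun j hj b => ?_)
  · have h := congrFun (congrFun hname ⟨i, hi⟩) (⟨r, hr⟩, b)
    simp only [nameMap] at h
    have h1 := blockObs_vert hf0 hz i ⟨r, hr⟩ b
    have h2 := blockObs_vert hf0 hz' i ⟨r, hr⟩ b
    rw [h] at h1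
    exact h1.symm.trans h2
  · have h := congrFun hlost ⟨j, hj⟩
    simp only [lostWord] at h
    split_ifs at h with h1 h2 h2
    · simp only [h1, h2, true_and]
      rw [Option.some.inj h]
    · simp only [h1, h2, false_and]

lemma roofSum_lt_one_of_lost (hf0 : ∀ u, 0 ≤ f u) {z : BSeq × ℝ} (hz : z ∈ recurDom f)
    {K i j : ℕ} (h1 : crossings f z i + K ≤ j) (h2 : j < crossings f z (i + 1)) :
    roofSum f K (shiftBy ((j : ℤ) + 1 - K) z.1) < 1 := by
  have h3 := (lt_crossings_iff hf0 hz (i + 1) j).1 h2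
  have h4 := (crossings_spec hf0 hz i).2
  obtain ⟨d, rfl⟩ := Nat.exists_eq_add_of_le h1
  have h5 := monotone_roofSum hf0 z.1 (show crossings f z i + 1 ≤ crossings f z i + 1 + d by omega)
  have e : crossings f z i + K + d + 1 = crossings f z i + 1 + d + K := by ring
  rw [e, roofSum_add] at h3
  have e2 : ((crossings f z i + K + d : ℕ) : ℤ) + 1 - K = (crossings f z i + 1 + d : ℕ) := by
    push_cast
    ring
  rw [e2]
  rw [Nat.cast_succ] at h3
  simp only at h5
  linarith

open Classical in
lemma hammingDist_lostWord_le (hf0 : ∀ u, 0 ≤ f u) {z : BSeq × ℝ} (hz : z ∈ recurDom f)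
    (K M : ℕ) : hammingDist (lostWord f K M z) (fun _ => none)
      ≤ ((Finset.range M).filter fun j : ℕ =>
          z.1 ∈ shiftBy ((j : ℤ) + 1 - K) ⁻¹' {u | roofSum f K u < 1}).card := by
  rw [hammingDist]
  refine Finset.card_le_card_of_injOn (fun j => (j : ℕ)) (fun j hj => ?_)
    fun _ _ _ _ h => Fin.ext h
  have hj := (Finset.mem_filter.1 hj).2
  rw [lostWord] at hj
  split_ifs at hj with h
  · obtain ⟨i, h1, h2⟩ := h
    exact Finset.mem_coe.2 (Finset.mem_filter.2
      ⟨Finset.mem_range.2 j.2, roofSum_lt_one_of_lost hf0 hz h1 h2⟩)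
  · exact absurd rfl hj

end BlockObservable

section LowerBound

variable {f : BSeq → ℝ} {p : ℝ} {m : Measure BSeq}

lemma HasBernoulliCylinders.domMeasure_fiber_le [IsProbabilityMeasure m] (hp0 : 0 < p)
    (hp1 : p < 1) (hm : HasBernoulliCylinders p m) (hf0 : ∀ u, 0 ≤ f u) (hfm : Measurable f)
    (hc : 0 < ∫ u, f u ∂m) {C : ℝ} (hC : 0 < C) (hfC : ∀ u, f u ≤ C) {K M n : ℕ} (hK : 0 < K)
    {G : Set (BSeq × ℝ)} (hG : G ⊆ recurDom f) (hGM : ∀ z ∈ G, M ≤ crossings f z n) {L : ℝ}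
    (hGL : ∀ z ∈ G, L ≤ ∑ j ∈ Finset.range M, symInfo p (z.1 (j : ℕ)))
    {B : Finset (Fin M → Option Bool)} (hGB : ∀ z ∈ G, lostWord f K M z ∈ B) {β : Type*}
    {F : BSeq × ℝ → β} (hF : ∀ z z', F z = F z' →
      nameMap (blockObs f K) n z = nameMap (blockObs f K) n z') (v : β) :
    domMeasure f m (F ⁻¹' {v} ∩ G)
      ≤ ENNReal.ofReal (C / (∫ u, f u ∂m) * (B.card * Real.exp (-L))) := by
  set E : (Fin M → Option Bool) → Set BSeq := fun a =>
    Prod.fst '' {z | z ∈ F ⁻¹' {v} ∩ G ∧ lostWord f K M z = a} with hE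
  have hE1 : ∀ a, m (E a) ≤ ENNReal.ofReal (Real.exp (-L)) := by
    intro a
    rcases (E a).eq_empty_or_nonempty with h | ⟨x, z, ⟨⟨hzv, hzG⟩, hza⟩, rfl⟩
    · simp [h]
    · have hsub : E a ⊆ {u : BSeq | ∀ j ∈ (Finset.range M).map Nat.castEmbedding, u j = z.1 j} := by
        rintro y ⟨w, ⟨⟨hwv, hwG⟩, hwa⟩, rfl⟩ j hj
        simp only [Finset.mem_map, Finset.mem_range, Nat.castEmbedding_apply] at hj
        obtain ⟨j, hj, rfl⟩ := hj
        exact word_eq_of_nameMap_eq hf0 hK (hG hwG) (hG hzG) (hGM w hwG)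
          (hF w z (Eq.trans hwv (Eq.symm hzv))) (hwa.trans hza.symm) j hj
      refine (measure_mono hsub).trans ?_
      rw [hm.measure_cylinder hp0 hp1, Finset.sum_map]
      refine ENNReal.ofReal_le_ofReal (Real.exp_le_exp.2 (neg_le_neg ?_))
      exact hGL z hzG
  have hsub : F ⁻¹' {v} ∩ G ⊆ Prod.fst ⁻¹' ⋃ a ∈ B, E a := fun z hz =>
    Set.mem_biUnion (hGB z hz.2) ⟨z, ⟨hz, rfl⟩, rfl⟩
  calc domMeasure f m (F ⁻¹' {v} ∩ G) ≤ domMeasure f m (Prod.fst ⁻¹' ⋃ a ∈ B, E a) :=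
        measure_mono hsub
    _ ≤ ENNReal.ofReal (C / ∫ u, f u ∂m) * m (⋃ a ∈ B, E a) := domMeasure_fst_le hfm hc hfC _
    _ ≤ ENNReal.ofReal (C / ∫ u, f u ∂m) * ∑ _a ∈ B, ENNReal.ofReal (Real.exp (-L)) := by
        gcongr
        exact (measure_biUnion_finset_le B E).trans (Finset.sum_le_sum fun a _ => hE1 a)
    _ = _ := by
        rw [Finset.sum_const, nsmul_eq_mul, ENNReal.ofReal_mul (by positivity),
          ENNReal.ofReal_mul (Nat.cast_nonneg _), ENNReal.ofReal_natCast]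

lemma HasBernoulliCylinders.ae_mem_recurDom [IsProbabilityMeasure m] (hp0 : 0 < p)
    (hp1 : p < 1) (hm : HasBernoulliCylinders p m) (hf : UnifLocal f) (hc : 0 < ∫ u, f u ∂m)
    {C : ℝ} (hfC : ∀ u, f u ≤ C) : domMeasure f m (recurDom f)ᶜ = 0 := by
  have h1 : (recurDom f)ᶜ ⊆ (suspDom f)ᶜ
      ∪ Prod.fst ⁻¹' {u | ¬ ∀ A : ℝ, ∃ j, A < roofSum f j u} := by
    intro z hz
    by_contra hcon
    simp only [Set.mem_union, Set.mem_compl_iff, not_or, not_not, Set.mem_preimage,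
      Set.mem_ofPred_eq] at hcon
    exact hz ⟨hcon.1, hcon.2⟩
  refine measure_mono_null h1 (measure_union_null (domMeasure_compl_suspDom hf.measurable) ?_)
  refine le_antisymm ((domMeasure_fst_le hf.measurable hc hfC _).trans_eq ?_) zero_le
  rw [ae_iff.1 (hm.ae_exists_lt_roofSum hp0 hp1 hf hc), mul_zero]

lemma domMeasure_union_fst_le [IsProbabilityMeasure m] (hfm : Measurable f)
    (hc : 0 < ∫ u, f u ∂m) {C : ℝ} (hC : 0 < C) (hfC : ∀ u, f u ≤ C) {E₁ E₂ E₃ : Set BSeq} {ε : ℝ}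
    (hε : 0 < ε) (h₁ : m E₁ ≤ ENNReal.ofReal (ε * (∫ u, f u ∂m) / (3 * C)))
    (h₂ : m E₂ ≤ ENNReal.ofReal (ε * (∫ u, f u ∂m) / (3 * C)))
    (h₃ : m E₃ ≤ ENNReal.ofReal (ε * (∫ u, f u ∂m) / (3 * C))) :
    domMeasure f m (Prod.fst ⁻¹' (E₁ ∪ E₂ ∪ E₃)) ≤ ENNReal.ofReal ε := by
  set δ := ε * (∫ u, f u ∂m) / (3 * C) with hδ
  have hδ0 : 0 ≤ δ := by positivity
  calc _ ≤ ENNReal.ofReal (C / ∫ u, f u ∂m) * m (E₁ ∪ E₂ ∪ E₃) := domMeasure_fst_le hfm hc hfC _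
    _ ≤ ENNReal.ofReal (C / ∫ u, f u ∂m)
        * (ENNReal.ofReal δ + ENNReal.ofReal δ + ENNReal.ofReal δ) := by
        gcongr
        exact (measure_union_le _ _).trans (add_le_add ((measure_union_le _ _).trans
          (add_le_add h₁ h₂)) h₃)
    _ = ENNReal.ofReal ε := by
        rw [← ENNReal.ofReal_add hδ0 hδ0, ← ENNReal.ofReal_add (by positivity) hδ0,
          ← ENNReal.ofReal_mul (by positivity)]
        congr 1
        rw [hδ]
        field_simp
        ring

lemma tendsto_natFloor_mul {a : ℝ} (ha : 0 < a) :
    Tendsto (fun n : ℕ => ⌊a * n⌋₊) atTop atTop :=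
  tendsto_nat_floor_atTop.comp (tendsto_natCast_atTop_atTop.const_mul_atTop ha)

lemma tendsto_natFloor_mul_div {a : ℝ} (ha : 0 ≤ a) :
    Tendsto (fun n : ℕ => (⌊a * n⌋₊ : ℝ) / n) atTop (𝓝 a) :=
  (tendsto_nat_floor_mul_div_atTop ha).comp tendsto_natCast_atTop_atTop

lemma HasBernoulliCylinders.exists_eventually_le_shannonEnt [IsProbabilityMeasure m] (hp0 : 0 < p)
    (hp1 : p < 1) (hm : HasBernoulliCylinders p m) (hf : UnifLocal f) (hf0 : ∀ u, 0 ≤ f u)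
    (hc : 0 < ∫ u, f u ∂m) {C : ℝ} (hC : 0 < C) (hfC : ∀ u, f u ≤ C) {h : ℝ}
    (hh : h = -p * Real.log p - (1 - p) * Real.log (1 - p)) {ε : ℝ} (hε : 0 < ε) (hε1 : ε < 1)
    (hεh : 2 * ε < h) :
    ∃ (k : ℕ) (P : SuspSpace shiftMap f → Fin k), Measurable P ∧ ∀ᶠ n : ℕ in atTop,
      (1 - 2 * ε) * (Real.log (ε * (∫ u, f u ∂m) / C)
          + ⌊(1 - ε) / (∫ u, f u ∂m) * n⌋₊ * (h - 2 * ε))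
        ≤ shannonEnt ((domMeasure f m).map (nameMap (fun z => P (Quot.mk _ z)) n)) := by
  classical
  have hfm := hf.measurable
  have h_int : Integrable f m := Integrable.of_bound hfm.aestronglyMeasurable C
    (ae_of_all _ fun u => by rw [Real.norm_eq_abs, abs_of_nonneg (hf0 u)]; exact hfC u)
  have := isProbabilityMeasure_domMeasure hf0 hfm h_int hc
  set c := ∫ u, f u ∂m with hcdef
  set δ := ε * c / (3 * C) with hδ
  have hδ0 : 0 < δ := by positivity
  obtain ⟨η, hη0, hball⟩ := exists_hammingBall_card_le (Option Bool) hε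
  obtain ⟨K, hKW, hK⟩ := ((hm.eventually_roofSum_le_le hp0 hp1 hf hc 1
    (mul_pos hδ0 hη0)).and (eventually_gt_atTop 0)).exists
  obtain ⟨k, P, hP, hPobs⟩ := exists_suspSpace_observable (f := f) hfm K
  refine ⟨k, P, hP, ?_⟩
  obtain ⟨L, hL⟩ := hm.exists_measure_symInfo_ge_le hp0 hp1 hε hδ0
  rw [← hh] at hL
  have ha : 0 < (1 - ε) / c := div_pos (by linarith) hc
  have hMtop := tendsto_natFloor_mul ha
  have hdev := hMtop.eventually
    (hm.eventually_roofSum_dev_le hp0 hp1 hf (ε := ε * c) (by positivity) hδ0)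
  have hb : Tendsto (fun n : ℕ => C / c * Real.exp (-(⌊(1 - ε) / c * n⌋₊ * (h - 2 * ε))))
      atTop (𝓝 (C / c * 0)) := by
    refine (Real.tendsto_exp_neg_atTop_nhds_zero.comp ?_).const_mul _
    exact (tendsto_natCast_atTop_atTop.comp hMtop).atTop_mul_const (by linarith)
  rw [mul_zero] at hb
  filter_upwards [hdev, hMtop.eventually_ge_atTop L, hMtop.eventually_gt_atTop 0,
    hb.eventually_le_const hε] with n hdevn hLn hM0 hbn
  set M := ⌊(1 - ε) / c * n⌋₊ with hMdef
  have hM0' : (0 : ℝ) < M := by exact_mod_cast hM0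
  have hMc : M * c ≤ (1 - ε) * n := by
    have := Nat.floor_le (a := (1 - ε) / c * n) (by positivity)
    rw [div_mul_eq_mul_div, le_div_iff₀ hc] at this
    rwa [hMdef, div_mul_eq_mul_div]
  set E₁ : Set BSeq := {u | ε * c * M ≤ |roofSum f M u - M * c|}
  set E₂ : Set BSeq := {u | η * M ≤ ((Finset.range M).filter fun j : ℕ =>
    u ∈ shiftBy ((j : ℤ) + 1 - K) ⁻¹' {u | roofSum f K u < 1}).card} with hE2
  set T := (Finset.range M).map (Nat.castEmbedding : ℕ ↪ ℤ) with hT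
  have hTcard : T.card = M := natCast_image_card M
  set E₃ : Set BSeq := {u | ε * T.card ≤ |∑ j ∈ T, symInfo p (u j) - T.card * h|}
  have hm₂ : m E₂ ≤ ENNReal.ofReal δ := by
    have hWmeas : MeasurableSet {u : BSeq | roofSum f K u < 1} :=
      measurableSet_lt (measurable_roofSum hfm K) measurable_const
    have hW : m {u : BSeq | roofSum f K u < 1} ≤ ENNReal.ofReal (δ * η) :=
      (measure_mono fun u (hu : roofSum f K u < 1) => hu.le).trans hKW
    refine (measure_card_ge_le m (Finset.range M)
      (fun j : ℕ => shiftBy ((j : ℤ) + 1 - K) ⁻¹' {u | roofSum f K u < 1})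
      (fun j _ => measurable_shiftBy _ hWmeas) (a := η * M) (by positivity)).trans ?_
    simp only [(hm.measurePreserving_shiftBy hp0 hp1 _).measure_preimage
      hWmeas.nullMeasurableSet, Finset.sum_const, Finset.card_range, nsmul_eq_mul]
    refine ENNReal.div_le_of_le_mul ?_
    rw [← ENNReal.ofReal_mul hδ0.le, ← mul_assoc, mul_comm _ (M : ℝ),
      ENNReal.ofReal_mul (Nat.cast_nonneg _), ENNReal.ofReal_natCast]
    gcongr
  set G : Set (BSeq × ℝ) := recurDom f ∩ (Prod.fst ⁻¹' (E₁ ∪ E₂ ∪ E₃))ᶜ with hGdef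
  have hG : domMeasure f m Gᶜ ≤ ENNReal.ofReal ε := by
    rw [hGdef, Set.compl_inter, compl_compl]
    refine (measure_union_le _ _).trans ?_
    rw [hm.ae_mem_recurDom hp0 hp1 hf hc hfC, zero_add]
    exact domMeasure_union_fst_le hfm hc hC hfC hε hdevn hm₂ (hL T (by rw [hTcard]; exact hLn))
  have hGz : ∀ z ∈ G, z.1 ∉ E₁ ∧ z.1 ∉ E₂ ∧ z.1 ∉ E₃ := by
    intro z hz
    have := hz.2
    simp only [Set.mem_compl_iff, Set.mem_preimage, Set.mem_union, not_or] at this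
    exact ⟨this.1.1, this.1.2, this.2⟩
  set B : Finset (Fin M → Option Bool) := Finset.univ.filter fun w =>
    (hammingDist w (fun _ => none) : ℝ) ≤ η * M with hB
  have hBcard : (B.card : ℝ) ≤ Real.exp (ε * M) :=
    hball M (fun _ => none) B fun w hw => (Finset.mem_filter.1 hw).2
  have hFm : Measurable (nameMap (fun z => P (Quot.mk _ z)) n) :=
    measurable_pi_lambda _ fun i => (hP.comp (measurable_suspMk _ _)).comp (measurable_vert _)
  have hfib := hm.domMeasure_fiber_le hp0 hp1 hf0 hfm hc hC hfC (K := K) (M := M) (n := n) hK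
    (G := G) (fun z hz => hz.1) (fun z hz => ?_) (L := M * (h - ε)) (fun z hz => ?_)
    (B := B) (fun z hz => ?_) (F := nameMap (fun z => P (Quot.mk _ z)) n)
    (fun z z' hzz => funext fun i => hPobs _ _ (congrFun hzz i))
  · have hres := le_shannonEnt_map (domMeasure f m) hFm G hε hG
      (b := C / c * Real.exp (-(M * (h - 2 * ε)))) (by positivity) hbn
      (fun v => (hfib v).trans (ENNReal.ofReal_le_ofReal ?_))
    · convert hres using 2
      rw [Real.log_div hε.ne' (by positivity), Real.log_mul (by positivity) (Real.exp_pos _).ne',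
        Real.log_exp, Real.log_div (by positivity) hC.ne', Real.log_div hC.ne' hc.ne',
        Real.log_mul hε.ne' hc.ne']
      ring
    · refine mul_le_mul_of_nonneg_left ?_ (by positivity)
      calc (B.card : ℝ) * Real.exp (-(M * (h - ε)))
          ≤ Real.exp (ε * M) * Real.exp (-(M * (h - ε))) := by gcongr
        _ = _ := by rw [← Real.exp_add]; ring_nf
  · have h1 := (hGz z hz).1
    obtain ⟨M', hM'⟩ := Nat.exists_eq_succ_of_ne_zero hM0.ne'
    have : M' < crossings f z n := by
      rw [lt_crossings_iff hf0 hz.1, ← Nat.succ_eq_add_one, ← hM']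
      simp only [E₁, Set.mem_ofPred_eq, not_le] at h1
      have h2 := (abs_lt.1 h1).2
      have h3 := hz.1.1.1
      have : (0 : ℝ) ≤ n := Nat.cast_nonneg n
      have h5 : ε * (M * c) ≤ ε * ((1 - ε) * n) := by gcongr
      have h6 : 0 ≤ ε * (ε * n) := by positivity
      nlinarith
    omega
  · have h3 := (hGz z hz).2.2
    simp only [E₃, Set.mem_ofPred_eq, not_le, hTcard] at h3
    have h4 := (abs_lt.1 h3).1
    rw [hT, Finset.sum_map] at h4
    simp only [Nat.castEmbedding_apply] at h4
    linarith
  · refine Finset.mem_filter.2 ⟨Finset.mem_univ _, ?_⟩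
    have h2 := (hGz z hz).2.1
    simp only [hE2, Set.mem_ofPred_eq, not_le] at h2
    exact le_trans (by exact_mod_cast hammingDist_lostWord_le hf0 hz.1 K M) h2.le

lemma bernoulliEntropy_pos (hp0 : 0 < p) (hp1 : p < 1) :
    0 < -p * Real.log p - (1 - p) * Real.log (1 - p) := by
  have h1 := Real.log_neg hp0 hp1
  have h2 := Real.log_neg (show 0 < 1 - p by linarith) (by linarith)
  nlinarith

lemma HasBernoulliCylinders.ofReal_le_kolSinai [IsProbabilityMeasure m] (hp0 : 0 < p)
    (hp1 : p < 1) (hm : HasBernoulliCylinders p m) (hf : UnifLocal f) (hf0 : ∀ u, 0 ≤ f u)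
    (hc : 0 < ∫ u, f u ∂m) {C : ℝ} (hC : 0 < C) (hfC : ∀ u, f u ≤ C) :
    ENNReal.ofReal ((-p * Real.log p - (1 - p) * Real.log (1 - p)) / ∫ u, f u ∂m)
      ≤ kolSinai (suspFlow shiftMap f 1) (suspMeasure shiftMap f m) := by
  set h := -p * Real.log p - (1 - p) * Real.log (1 - p) with hh
  have hhpos : 0 < h := bernoulliEntropy_pos hp0 hp1
  set c := ∫ u, f u ∂m with hcdef
  have hcont : Tendsto (fun ε : ℝ => ENNReal.ofReal ((1 - 2 * ε) * ((1 - ε) / c * (h - 2 * ε))))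
      (𝓝[>] 0) (𝓝 (ENNReal.ofReal (h / c))) := by
    refine (ENNReal.continuous_ofReal.tendsto _).comp ?_
    have : Tendsto (fun ε : ℝ => (1 - 2 * ε) * ((1 - ε) / c * (h - 2 * ε))) (𝓝 0)
        (𝓝 ((1 - 2 * 0) * ((1 - 0) / c * (h - 2 * 0)))) :=
      Continuous.tendsto (by fun_prop) _
    have e : (1 - 2 * 0) * ((1 - 0) / c * (h - 2 * 0)) = h / c := by ring
    rw [e] at this
    exact this.mono_left nhdsWithin_le_nhds
  refine le_of_tendsto hcont ?_
  filter_upwards [Ioo_mem_nhdsGT (show (0 : ℝ) < min 1 (h / 2) by positivity)] with ε hε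
  obtain ⟨hε1, hεh⟩ := lt_min_iff.1 hε.2
  obtain ⟨k, P, hP, hev⟩ := hm.exists_eventually_le_shannonEnt hp0 hp1 hf hf0 hc hC hfC hh hε.1 hε1
    (by linarith)
  refine le_trans ?_ (le_iSup_of_le k (le_iSup_of_le P (le_iSup_of_le hP le_rfl)))
  rw [obsEntropy_suspFlow hP]
  have ha : 0 ≤ (1 - ε) / c := div_nonneg (by linarith) hc.le
  have hlim : Tendsto (fun n : ℕ => ENNReal.ofReal ((1 - 2 * ε) * (Real.log (ε * c / C) / n
      + ⌊(1 - ε) / c * n⌋₊ / n * (h - 2 * ε)))) atTop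
      (𝓝 (ENNReal.ofReal ((1 - 2 * ε) * (0 + (1 - ε) / c * (h - 2 * ε))))) :=
    (ENNReal.continuous_ofReal.tendsto _).comp
      (((tendsto_const_div_atTop_nhds_zero_nat _).add
        ((tendsto_natFloor_mul_div ha).mul_const _)).const_mul _)
  rw [zero_add] at hlim
  rw [← hlim.liminf_eq]
  refine liminf_le_liminf ?_
  filter_upwards [hev, eventually_gt_atTop 0] with n hn hn0
  refine ENNReal.ofReal_le_ofReal ?_
  have hn0' : (0 : ℝ) < n := by exact_mod_cast hn0
  rw [le_div_iff₀ hn0']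
  refine le_trans (le_of_eq ?_) hn
  simp only [← hcdef]
  generalize (⌊(1 - ε) / c * n⌋₊ : ℝ) = y
  field_simp

end LowerBound

section UpperBound

variable {f : BSeq → ℝ} {p : ℝ} {m : Measure BSeq}

lemma card_typical_words_le (hp0 : 0 < p) (hp1 : p < 1) {ι : Type*} [Fintype ι] [DecidableEq ι]
    {L : ℝ} {W : Finset (ι → Bool)} (hW : ∀ w ∈ W, ∑ i, symInfo p (w i) ≤ L) :
    (W.card : ℝ) ≤ Real.exp L := by
  have h1 : ∑ w : ι → Bool, Real.exp (-∑ i, symInfo p (w i)) = 1 := by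
    have := Finset.prod_univ_sum (fun _ : ι => (Finset.univ : Finset Bool))
      (fun _ b => Real.exp (-symInfo p b))
    rw [Fintype.piFinset_univ] at this
    simp only [← Finset.sum_neg_distrib, Real.exp_sum]
    rw [← this]
    simp [exp_neg_symInfo hp0 hp1]
  have h2 : W.card • Real.exp (-L) ≤ ∑ w ∈ W, Real.exp (-∑ i, symInfo p (w i)) :=
    Finset.card_nsmul_le_sum _ _ _ fun w hw => Real.exp_le_exp.2 (neg_le_neg (hW w hw))
  have h3 : ∑ w ∈ W, Real.exp (-∑ i, symInfo p (w i)) ≤ 1 := by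
    rw [← h1]
    exact Finset.sum_le_univ_sum_of_nonneg fun _ => (Real.exp_pos _).le
  rw [nsmul_eq_mul, Real.exp_neg, ← div_eq_mul_inv] at h2
  exact (div_le_one (Real.exp_pos L)).1 (h2.trans h3)

lemma exists_separation_of_isCompact {A B : Set (BSeq × ℝ)} (hA : IsCompact A) (hB : IsCompact B)
    (hAB : Disjoint A B) : ∃ N : ℕ, ∀ z ∈ A, ∀ w ∈ B,
      (∀ j : ℤ, -(N : ℤ) ≤ j → j ≤ N → z.1 j = w.1 j) → ¬ |z.2 - w.2| ≤ 1 / ((N : ℝ) + 1) := by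
  by_contra! hcon
  choose z hz w hw hzw hdist using hcon
  obtain ⟨y, hy, φ, hφ, hlim⟩ := hA.tendsto_subseq hz
  have hlim' : Tendsto (w ∘ φ) atTop (𝓝 y) := by
    refine Prod.tendsto_iff _ _ |>.2 ⟨?_, ?_⟩
    · refine tendsto_pi_nhds.2 fun j => ?_
      have h1 := tendsto_pi_nhds.1 ((Prod.tendsto_iff _ _).1 hlim).1 j
      refine h1.congr' ?_
      filter_upwards [hφ.tendsto_atTop.eventually_ge_atTop j.natAbs] with N hN
      exact hzw (φ N) j (by omega) (by omega)
    · have h1 := ((Prod.tendsto_iff _ _).1 hlim).2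
      have h2 : Tendsto (fun N => (z (φ N)).2 - (w (φ N)).2) atTop (𝓝 0) :=
        squeeze_zero_norm (fun N => hdist (φ N))
          (tendsto_one_div_add_atTop_nhds_zero_nat.comp hφ.tendsto_atTop)
      have h3 := h1.sub h2
      rw [sub_zero] at h3
      exact h3.congr fun N => by simp
  exact Set.disjoint_left.1 hAB hy (hB.isClosed.mem_of_tendsto hlim'
    (Eventually.of_forall fun N => hw _))

lemma exists_uniform_separation {k : ℕ} {A : Fin k → Set (BSeq × ℝ)} (hA : ∀ a, IsCompact (A a))
    (hd : ∀ a b, a ≠ b → Disjoint (A a) (A b)) : ∃ N : ℕ, ∀ a b, ∀ z ∈ A a, ∀ w ∈ A b,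
      (∀ j : ℤ, -(N : ℤ) ≤ j → j ≤ N → z.1 j = w.1 j) → |z.2 - w.2| ≤ 1 / ((N : ℝ) + 1) →
      a = b := by
  have h : ∀ a b, ∃ N : ℕ, a ≠ b → ∀ z ∈ A a, ∀ w ∈ A b,
      (∀ j : ℤ, -(N : ℤ) ≤ j → j ≤ N → z.1 j = w.1 j) → ¬ |z.2 - w.2| ≤ 1 / ((N : ℝ) + 1) := by
    intro a b
    by_cases hab : a = b
    · exact ⟨0, fun h => absurd hab h⟩
    · obtain ⟨N, hN⟩ := exists_separation_of_isCompact (hA a) (hA b) (hd a b hab)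
      exact ⟨N, fun _ => hN⟩
  choose N hN using h
  refine ⟨Finset.univ.sup fun q : Fin k × Fin k => N q.1 q.2, fun a b z hz w hw hzw hdist => ?_⟩
  have hle : N a b ≤ Finset.univ.sup fun q : Fin k × Fin k => N q.1 q.2 :=
    Finset.le_sup (f := fun q : Fin k × Fin k => N q.1 q.2) (Finset.mem_univ (a, b))
  by_contra hab
  refine hN a b hab z hz w hw (fun j h1 h2 => hzw j (by omega) (by omega)) (hdist.trans ?_)
  gcongr

/-- A finite measurable partition is, up to a set of small measure, a partition into compact sets
on a bounded strip. -/
lemma exists_compact_approx [IsProbabilityMeasure m] {k : ℕ} {Q : BSeq × ℝ → Fin k}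
    (hQ : Measurable Q) (a b : ℝ) {θ : ℝ≥0∞} (hθ : θ ≠ 0) :
    ∃ A : Fin k → Set (BSeq × ℝ), (∀ i, IsCompact (A i)) ∧ (∀ i, A i ⊆ Q ⁻¹' {i}) ∧
      m.prod volume (Set.univ ×ˢ Set.Icc a b \ ⋃ i, A i) ≤ θ := by
  have hstrip : m.prod volume ((Set.univ : Set BSeq) ×ˢ Set.Icc a b) ≠ ⊤ := by
    rw [Measure.prod_prod, measure_univ, one_mul, Real.volume_Icc]
    exact ENNReal.ofReal_ne_top
  have hmeas : ∀ i, MeasurableSet (Q ⁻¹' {i} ∩ (Set.univ : Set BSeq) ×ˢ Set.Icc a b) := fun i =>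
    (hQ (measurableSet_singleton i)).inter (MeasurableSet.univ.prod measurableSet_Icc)
  have h : ∀ i, ∃ A ⊆ Q ⁻¹' {i} ∩ (Set.univ : Set BSeq) ×ˢ Set.Icc a b, IsCompact A ∧
      m.prod volume ((Q ⁻¹' {i} ∩ (Set.univ : Set BSeq) ×ˢ Set.Icc a b) \ A) < θ / (k + 1) :=
    fun i => (hmeas i).exists_isCompact_sdiff_lt
      (ne_top_of_le_ne_top hstrip (measure_mono Set.inter_subset_right))
      (ENNReal.div_pos hθ (by simp)).ne'
  choose A hA hAc hAm using h
  refine ⟨A, hAc, fun i => (hA i).trans Set.inter_subset_left, ?_⟩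
  have hsub : (Set.univ : Set BSeq) ×ˢ Set.Icc a b \ ⋃ i, A i
      ⊆ ⋃ i, ((Q ⁻¹' {i} ∩ (Set.univ : Set BSeq) ×ˢ Set.Icc a b) \ A i) := fun z hz =>
    Set.mem_iUnion.2 ⟨Q z, ⟨rfl, hz.1⟩, fun h => hz.2 (Set.mem_iUnion.2 ⟨_, h⟩)⟩
  calc _ ≤ ∑ i, m.prod volume ((Q ⁻¹' {i} ∩ (Set.univ : Set BSeq) ×ˢ Set.Icc a b) \ A i) :=
        (measure_mono hsub).trans (measure_iUnion_fintype_le _ _)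
    _ ≤ ∑ _i : Fin k, θ / (k + 1) := Finset.sum_le_sum fun i _ => (hAm i).le
    _ ≤ θ := by
        rw [Finset.sum_const, Finset.card_univ, Fintype.card_fin, nsmul_eq_mul,
          mul_div_assoc', mul_comm]
        refine ENNReal.div_le_of_le_mul ?_
        gcongr
        exact le_self_add

/-- The points having a lift at height `t` above them in `B`. -/
def liftSet (f : BSeq → ℝ) (B : Set (BSeq × ℝ)) (t : ℝ) : Set (BSeq × ℝ) :=
  {z | ∃ j : ℕ, (suspStep f)^[j] (vert t z) ∈ B}

lemma measurableSet_liftSet (hfm : Measurable f) {B : Set (BSeq × ℝ)} (hB : MeasurableSet B)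
    (t : ℝ) : MeasurableSet (liftSet f B t) := by
  have : liftSet f B t = ⋃ j : ℕ, ((suspStep f)^[j] ∘ vert t) ⁻¹' B := by
    ext z
    simp [liftSet]
  rw [this]
  exact MeasurableSet.iUnion fun j => ((measurable_suspStep hfm).iterate j).comp
    (measurable_vert t) hB

lemma domMeasure_liftSet_le [SFinite m] (hf0 : ∀ u, 0 ≤ f u) (hfm : Measurable f)
    (hm : MeasurePreserving (shiftBy (-1)) m m) {B : Set (BSeq × ℝ)} (hB : MeasurableSet B)
    (t : ℝ) : domMeasure f m (liftSet f B t)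
      ≤ (ENNReal.ofReal (∫ x, f x ∂m))⁻¹ * m.prod volume B := by
  rw [domMeasure_apply hfm]
  refine mul_le_mul' le_rfl ?_
  have : liftSet f B t ∩ suspDom f
      ⊆ ⋃ j : ℕ, (suspDom f ∩ {z | (suspStep f)^[j] (vert t z) ∈ B}) := by
    rintro z ⟨⟨j, hj⟩, hz⟩
    exact Set.mem_iUnion.2 ⟨j, hz, hj⟩
  exact (measure_mono this).trans ((measure_iUnion_le _).trans
    (tsum_measure_dom_inter_le hf0 hfm hm t hB))

lemma roofSum_congr_of_window (hcongr : ∀ (u v : BSeq) (a b : ℤ), a ≤ 0 → 0 ≤ b → u a = true →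
    u b = true → (∀ n, a ≤ n → n ≤ b → u n = v n) → f u = f v) {x y : BSeq} {M j : ℕ} {R : ℤ}
    (hj : j ≤ M) (hxy : ∀ n, -R ≤ n → n ≤ M + R → x n = y n)
    (hl : ∃ a, -R ≤ a ∧ a ≤ 0 ∧ x a = true) (hr : ∃ b, (M : ℤ) ≤ b ∧ b ≤ M + R ∧ x b = true) :
    roofSum f j x = roofSum f j y := by
  obtain ⟨a, ha1, ha2, hxa⟩ := hl
  obtain ⟨b, hb1, hb2, hxb⟩ := hr
  refine Finset.sum_congr rfl fun i hi => ?_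
  have hi := Finset.mem_range.1 hi
  refine hcongr _ _ (a - i) (b - i) (by omega) (by omega) ?_ ?_ fun n h1 h2 => ?_
  · simpa [shiftBy] using hxa
  · simpa [shiftBy] using hxb
  · exact hxy _ (by omega) (by omega)

/-- Two points whose base sequences agree on a long window and whose heights are close have the
same symbol at every time at which no lift of either falls outside the separated sets. -/
lemma observable_eq_of_window (hf0 : ∀ u, 0 ≤ f u) {C : ℝ} (hfC : ∀ u, f u ≤ C)
    (hcongr : ∀ (u v : BSeq) (a b : ℤ), a ≤ 0 → 0 ≤ b → u a = true →
    u b = true → (∀ n, a ≤ n → n ≤ b → u n = v n) → f u = f v) {k : ℕ} {Q : BSeq × ℝ → Fin k}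
    (hQ : ∀ z, Q (suspStep f z) = Q z) {A : Fin k → Set (BSeq × ℝ)} (hA : ∀ i, A i ⊆ Q ⁻¹' {i})
    {N : ℕ} (hN : ∀ a b, ∀ z ∈ A a, ∀ w ∈ A b,
      (∀ j : ℤ, -(N : ℤ) ≤ j → j ≤ N → z.1 j = w.1 j) → |z.2 - w.2| ≤ 1 / ((N : ℝ) + 1) → a = b)
    {M n i : ℕ} {R : ℤ} (hNR : (N : ℤ) ≤ R) {z w : BSeq × ℝ} (hz : z ∈ recurDom f)
    (hM : (n : ℝ) + C ≤ roofSum f M z.1) (hi : i < n)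
    (hzw : ∀ j, -R ≤ j → j ≤ M + R → z.1 j = w.1 j)
    (hl : ∃ a, -R ≤ a ∧ a ≤ 0 ∧ z.1 a = true) (hr : ∃ b, (M : ℤ) ≤ b ∧ b ≤ M + R ∧ z.1 b = true)
    (hdist : |z.2 - w.2| ≤ 1 / ((N : ℝ) + 1))
    (hzB : z ∉ liftSet f (Set.univ ×ˢ Set.Icc (-1) (C + 1) \ ⋃ a, A a) i)
    (hwB : w ∉ liftSet f (Set.univ ×ˢ Set.Icc (-1) (C + 1) \ ⋃ a, A a) i) :
    Q (vert i z) = Q (vert i w) := by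
  have hQj : ∀ j z, Q ((suspStep f)^[j] z) = Q z := by
    intro j z
    induction j with
    | zero => rfl
    | succ j ih => rw [Function.iterate_succ_apply', hQ, ih]
  set j := crossings f z i with hj
  obtain ⟨h1, h2⟩ := crossings_spec hf0 hz i
  rw [← hj] at h1 h2
  have hjM : j ≤ M := by
    by_contra! hlt
    have h3 := (lt_crossings_iff hf0 hz i M).1 hlt
    have h4 := monotone_roofSum hf0 z.1 (Nat.le_succ M)
    have h5 := hz.1.2.trans_le (hfC _)
    have h6 : (i : ℝ) < n := by exact_mod_cast hi
    simp only [Nat.succ_eq_add_one] at h4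
    linarith
  have hS := roofSum_congr_of_window hcongr hjM hzw hl hr
  have hz2 : (suspStep f)^[j] (vert i z) = (shiftBy j z.1, z.2 + i - roofSum f j z.1) :=
    suspStep_iterate _ _
  have hw2 : (suspStep f)^[j] (vert i w) = (shiftBy j w.1, w.2 + i - roofSum f j z.1) := by
    rw [hS]
    exact suspStep_iterate _ _
  have h01 : 1 / ((N : ℝ) + 1) ≤ 1 := by
    rw [div_le_one (by positivity)]
    linarith [(Nat.cast_nonneg N : (0 : ℝ) ≤ N)]
  have hdist1 := abs_le.1 (hdist.trans h01)
  rw [roofSum_succ] at h2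
  have hfC' := hfC (shiftBy j z.1)
  have hmem : ∀ y : BSeq × ℝ, y ∈ (Set.univ : Set BSeq) ×ˢ Set.Icc (-1) (C + 1) →
      y ∉ Set.univ ×ˢ Set.Icc (-1) (C + 1) \ ⋃ a, A a → y ∈ A (Q y) := by
    intro y hy hy'
    obtain ⟨a, ha⟩ : ∃ a, y ∈ A a := by
      by_contra hcon
      exact hy' ⟨hy, fun h => hcon (Set.mem_iUnion.1 h)⟩
    have : Q y = a := hA a ha
    rwa [this]
  have hzA := hmem _ (by rw [hz2]; exact ⟨trivial, by simp only; linarith,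
    by simp only; linarith⟩) fun h => hzB ⟨j, h⟩
  have hwA := hmem _ (by rw [hw2]; exact ⟨trivial, by simp only; linarith,
    by simp only; linarith⟩) fun h => hwB ⟨j, h⟩
  have := hN _ _ _ hzA _ hwA (fun r hr1 hr2 => by
    rw [hz2, hw2]
    exact hzw _ (by omega) (by omega)) (by
    rw [hz2, hw2]
    simp only
    have e : z.2 + i - roofSum f j z.1 - (w.2 + i - roofSum f j z.1) = z.2 - w.2 := by ring
    rwa [e])
  rwa [hQj, hQj] at this

lemma card_image_le_of_fiberwise_hammingDist_le {Ω κ α : Type*} [Fintype α] [DecidableEq α]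
    [DecidableEq κ] {n : ℕ} {η X : ℝ} (hball : ∀ (v : Fin n → α) (B : Finset (Fin n → α)),
      (∀ w ∈ B, (hammingDist w v : ℝ) ≤ η * n) → (B.card : ℝ) ≤ X) (hX : 0 ≤ X)
    {F : Ω → Fin n → α} {G : Set Ω} {key : Ω → κ} {S : Finset κ} (hS : ∀ z ∈ G, key z ∈ S)
    (hF : ∀ z ∈ G, ∀ w ∈ G, key z = key w → (hammingDist (F z) (F w) : ℝ) ≤ η * n)
    {J : Finset (Fin n → α)} (hJ : ∀ v ∈ J, ∃ z ∈ G, F z = v) :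
    (J.card : ℝ) ≤ S.card * X := by
  classical
  have hsub : J ⊆ S.biUnion fun s => J.filter fun v => ∃ z ∈ G, key z = s ∧ F z = v := by
    intro v hv
    obtain ⟨z, hz, rfl⟩ := hJ v hv
    exact Finset.mem_biUnion.2 ⟨key z, hS z hz, Finset.mem_filter.2 ⟨hv, z, hz, rfl, rfl⟩⟩
  have hfib : ∀ s ∈ S, ((J.filter fun v => ∃ z ∈ G, key z = s ∧ F z = v).card : ℝ) ≤ X := by
    intro s _
    rcases (J.filter fun v => ∃ z ∈ G, key z = s ∧ F z = v).eq_empty_or_nonempty with h | ⟨v, hv⟩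
    · rw [h]
      simpa using hX
    · obtain ⟨z, hz, hzs, hzv⟩ := (Finset.mem_filter.1 hv).2
      refine hball v _ fun w hw => ?_
      obtain ⟨y, hy, hys, rfl⟩ := (Finset.mem_filter.1 hw).2
      rw [← hzv]
      exact hF y hy z hz (hys.trans hzs.symm)
  calc (J.card : ℝ) ≤ ∑ s ∈ S, ((J.filter fun v => ∃ z ∈ G, key z = s ∧ F z = v).card : ℝ) := by
        exact_mod_cast (Finset.card_le_card hsub).trans Finset.card_biUnion_le
    _ ≤ S.card • X := Finset.sum_le_card_nsmul _ _ _ hfib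
    _ = S.card * X := nsmul_eq_mul _ _

lemma hammingDist_le_card_add_card {α : Type*} [DecidableEq α] {n : ℕ} {x y : Fin n → α}
    {A B : Finset ℕ} (h : ∀ i : Fin n, (i : ℕ) ∉ A → (i : ℕ) ∉ B → x i = y i) :
    hammingDist x y ≤ A.card + B.card := by
  refine le_trans ?_ (Finset.card_union_le A B)
  refine Finset.card_le_card_of_injOn Fin.val (fun i hi => ?_) Fin.val_injective.injOn
  by_contra hcon
  simp only [Finset.coe_union, Set.mem_union, Finset.mem_coe, not_or] at hcon
  exact (Finset.mem_filter.1 (Finset.mem_coe.1 hi)).2 (h i hcon.1 hcon.2)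

lemma abs_sub_le_of_natFloor_mul_eq {x y : ℝ} (hx : 0 ≤ x) (hy : 0 ≤ y) {N : ℕ}
    (h : ⌊x * (N + 1)⌋₊ = ⌊y * (N + 1)⌋₊) : |x - y| ≤ 1 / ((N : ℝ) + 1) := by
  have hN : (0 : ℝ) < N + 1 := by positivity
  have h1 := Nat.floor_le (mul_nonneg hx hN.le)
  have h2 := Nat.floor_le (mul_nonneg hy hN.le)
  have h3 := Nat.lt_floor_add_one (x * ((N : ℝ) + 1))
  have h4 := Nat.lt_floor_add_one (y * ((N : ℝ) + 1))
  rw [h] at h1 h3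
  rw [le_div_iff₀ hN, ← abs_of_pos hN, ← abs_mul, abs_le]
  constructor <;> nlinarith

/-- The sequences with no `1` in the two blocks of length `R + 1` ending at `0` and starting at
`M`. -/
def emptyEnds (M R : ℕ) : Set BSeq :=
  {u | ∀ j ∈ Finset.Icc (-(R : ℤ)) 0, u j = false} ∪
    {u | ∀ j ∈ Finset.Icc (M : ℤ) (M + R), u j = false}

lemma HasBernoulliCylinders.measure_emptyEnds_le (hp1 : p < 1) (hm : HasBernoulliCylinders p m)
    (M R : ℕ) : m (emptyEnds M R) ≤ ENNReal.ofReal (2 * (1 - p) ^ (R + 1)) := by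
  refine (measure_union_le _ _).trans_eq ?_
  rw [hm.measure_false, hm.measure_false, Int.card_Icc, Int.card_Icc,
    show (0 + 1 - -(R : ℤ)).toNat = R + 1 by omega,
    show ((M : ℤ) + R + 1 - M).toNat = R + 1 by omega, ← two_mul,
    ENNReal.ofReal_mul (by norm_num), ENNReal.ofReal_pow (by linarith)]
  simp

lemma exists_of_notMem_emptyEnds {M R : ℕ} {u : BSeq} (hu : u ∉ emptyEnds M R) :
    (∃ a : ℤ, -(R : ℤ) ≤ a ∧ a ≤ 0 ∧ u a = true) ∧
      ∃ b : ℤ, (M : ℤ) ≤ b ∧ b ≤ M + R ∧ u b = true := by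
  simp only [emptyEnds, Set.mem_union, Set.mem_ofPred_eq, Finset.mem_Icc, not_or, not_forall,
    Bool.not_eq_false] at hu
  obtain ⟨⟨a, ⟨h1, h2⟩, h3⟩, b, ⟨h4, h5⟩, h6⟩ := hu
  exact ⟨⟨a, h1, h2, h3⟩, b, h4, h5, h6⟩

lemma HasBernoulliCylinders.measure_card_liftSet_ge_le [IsProbabilityMeasure m] (hp0 : 0 < p)
    (hp1 : p < 1) (hm : HasBernoulliCylinders p m) (hf0 : ∀ u, 0 ≤ f u) (hfm : Measurable f)
    (hc : 0 < ∫ u, f u ∂m) {B : Set (BSeq × ℝ)} (hB : MeasurableSet B) {ε η : ℝ} (hε : 0 < ε)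
    (hη : 0 < η) (hBm : m.prod volume B ≤ ENNReal.ofReal (ε * η * ∫ u, f u ∂m))
    [∀ z, DecidablePred fun i : ℕ => z ∈ liftSet f B i] {n : ℕ} (hn : 0 < n) :
    domMeasure f m {z | η * n ≤ (((Finset.range n).filter fun i : ℕ => z ∈ liftSet f B i).card : ℝ)}
      ≤ ENNReal.ofReal ε := by
  have hn' : (0 : ℝ) < n := by exact_mod_cast hn
  refine (measure_card_ge_le _ (Finset.range n) (fun i : ℕ => liftSet f B i)
    (fun i _ => measurableSet_liftSet hfm hB i) (a := η * n) (by positivity)).trans ?_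
  refine ENNReal.div_le_of_le_mul ?_
  have hle : ∀ i ∈ Finset.range n, domMeasure f m (liftSet f B (i : ℝ))
      ≤ ENNReal.ofReal (ε * η) := by
    intro i _
    refine (domMeasure_liftSet_le hf0 hfm (hm.measurePreserving_shiftBy hp0 hp1 _) hB i).trans ?_
    calc _ ≤ (ENNReal.ofReal (∫ x, f x ∂m))⁻¹ * ENNReal.ofReal (ε * η * ∫ u, f u ∂m) := by
          gcongr
      _ = ENNReal.ofReal (ε * η) := by
          rw [← ENNReal.ofReal_inv_of_pos hc, ← ENNReal.ofReal_mul (by positivity)]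
          congr 1
          field_simp
  calc _ ≤ (Finset.range n).card • ENNReal.ofReal (ε * η) := Finset.sum_le_card_nsmul _ _ _ hle
    _ = ENNReal.ofReal ε * ENNReal.ofReal (η * n) := by
        rw [Finset.card_range, nsmul_eq_mul, ← ENNReal.ofReal_natCast,
          ← ENNReal.ofReal_mul (by positivity), ← ENNReal.ofReal_mul (by positivity)]
        congr 1
        ring

lemma HasBernoulliCylinders.exists_eventually_shannonEnt_le [IsProbabilityMeasure m] (hp0 : 0 < p)
    (hp1 : p < 1) (hm : HasBernoulliCylinders p m) (hf : UnifLocal f) (hf0 : ∀ u, 0 ≤ f u)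
    (hc : 0 < ∫ u, f u ∂m) {C : ℝ} (hC : 0 < C) (hfC : ∀ u, f u ≤ C)
    (hcongr : ∀ (u v : BSeq) (a b : ℤ), a ≤ 0 → 0 ≤ b → u a = true →
      u b = true → (∀ n, a ≤ n → n ≤ b → u n = v n) → f u = f v) {h : ℝ}
    (hh : h = -p * Real.log p - (1 - p) * Real.log (1 - p)) (hhpos : 0 < h) {k : ℕ}
    {Q : BSeq × ℝ → Fin k} (hQm : Measurable Q) (hQ : ∀ z, Q (suspStep f z) = Q z) {ε : ℝ}
    (hε : 0 < ε) :
    ∃ D : ℝ, ∀ᶠ n : ℕ in atTop, shannonEnt ((domMeasure f m).map (nameMap Q n))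
      ≤ (⌊(1 + ε) / (∫ u, f u ∂m) * n⌋₊ + 2 * ⌊ε * n⌋₊ + 1) * (h + ε) + D + ε * n
        + 2 * ε * (n * Real.log k) + 1 := by
  classical
  have hfm := hf.measurable
  have h_int : Integrable f m := Integrable.of_bound hfm.aestronglyMeasurable C
    (ae_of_all _ fun u => by rw [Real.norm_eq_abs, abs_of_nonneg (hf0 u)]; exact hfC u)
  have := isProbabilityMeasure_domMeasure hf0 hfm h_int hc
  obtain ⟨η, hη0, hball⟩ := exists_hammingBall_card_le (Fin k) hε
  obtain ⟨A, hAc, hAQ, hAm⟩ := exists_compact_approx (m := m) hQm (-1) (C + 1)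
    (θ := ENNReal.ofReal (ε * (η / 2) * ∫ u, f u ∂m))
    (ENNReal.ofReal_pos.2 (by positivity)).ne'
  obtain ⟨N, hN⟩ := exists_uniform_separation hAc fun a b hab =>
    (Set.disjoint_singleton.2 hab).preimage Q |>.mono (hAQ a) (hAQ b)
  set Bad : Set (BSeq × ℝ) := Set.univ ×ˢ Set.Icc (-1) (C + 1) \ ⋃ a, A a with hBad
  have hBadm : MeasurableSet Bad := (MeasurableSet.univ.prod measurableSet_Icc).diff
    (MeasurableSet.iUnion fun a => (hAc a).measurableSet)
  have hbad := fun n : ℕ => hm.measure_card_liftSet_ge_le hp0 hp1 hf0 hfm hc hBadm hε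
    (half_pos hη0) hAm (n := n)
  set c := ∫ u, f u ∂m with hcdef
  set δ := ε * c / (3 * C) with hδ
  have hδ0 : 0 < δ := by positivity
  obtain ⟨L, hL⟩ := hm.exists_measure_symInfo_ge_le hp0 hp1 hε hδ0
  rw [← hh] at hL
  have ha : 0 < (1 + ε) / c := by positivity
  have hMtop := tendsto_natFloor_mul ha
  have hRtop := tendsto_natFloor_mul hε
  set ε₁ := ε * c / (2 * (1 + ε)) with hε₁
  have hdev := hMtop.eventually
    (hm.eventually_roofSum_dev_le hp0 hp1 hf (ε := ε₁) (by positivity) hδ0)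
  have hb : Tendsto (fun n : ℕ => 2 * (1 - p) ^ (⌊ε * n⌋₊ + 1)) atTop (𝓝 (2 * 0)) :=
    ((tendsto_pow_atTop_nhds_zero_of_lt_one (by linarith) (by linarith)).comp
      ((tendsto_add_atTop_nat 1).comp hRtop)).const_mul _
  rw [mul_zero] at hb
  set Nc := ⌊C * (N + 1)⌋₊ + 1 with hNc
  have hlong := (tendsto_natCast_atTop_atTop (R := ℝ)).const_mul_atTop (half_pos hε)
  refine ⟨Real.log Nc, ?_⟩
  filter_upwards [hdev, hMtop.eventually_ge_atTop L, hRtop.eventually_ge_atTop N,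
    hb.eventually_le_const hδ0, eventually_gt_atTop 0, hlong.eventually_ge_atTop (c + C)]
    with n hdevn hLn hNR hbn hn0 hlongn
  set M := ⌊(1 + ε) / c * n⌋₊ with hMdef
  set R := ⌊ε * n⌋₊ with hRdef
  have hMle : M * c ≤ (1 + ε) * n := by
    have := Nat.floor_le (a := (1 + ε) / c * n) (by positivity)
    rw [div_mul_eq_mul_div, le_div_iff₀ hc] at this
    rwa [hMdef, div_mul_eq_mul_div]
  have hMlt : (1 + ε) * n < (M + 1) * c := by
    have := Nat.lt_floor_add_one ((1 + ε) / c * n)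
    rw [← hMdef, div_mul_eq_mul_div, div_lt_iff₀ hc] at this
    exact this
  have hM₁ : ε₁ * M ≤ ε / 2 * n := by
    rw [hε₁, div_mul_eq_mul_div, div_le_iff₀ (by positivity)]
    nlinarith
  set T : Finset ℤ := Finset.Icc (-(R : ℤ)) (M + R) with hT
  have hTcard : T.card = M + 2 * R + 1 := by
    rw [hT, Int.card_Icc]
    omega
  set E₁ : Set BSeq := {u | ε₁ * M ≤ |roofSum f M u - M * c|}
  set E₃ : Set BSeq := {u | ε * T.card ≤ |∑ j ∈ T, symInfo p (u j) - T.card * h|}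
  set G : Set (BSeq × ℝ) := recurDom f ∩ (Prod.fst ⁻¹' (E₁ ∪ emptyEnds M R ∪ E₃))ᶜ ∩
    {z | η / 2 * n ≤ (((Finset.range n).filter fun i : ℕ => z ∈ liftSet f Bad i).card : ℝ)}ᶜ
    with hGdef
  have hG : domMeasure f m Gᶜ ≤ ENNReal.ofReal (2 * ε) := by
    rw [hGdef, Set.compl_inter, Set.compl_inter, compl_compl, compl_compl, two_mul,
      ENNReal.ofReal_add hε.le hε.le]
    refine (measure_union_le _ _).trans (add_le_add ((measure_union_le _ _).trans ?_) (hbad n hn0))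
    rw [hm.ae_mem_recurDom hp0 hp1 hf hc hfC, zero_add]
    exact domMeasure_union_fst_le hfm hc hC hfC hε hdevn
      ((hm.measure_emptyEnds_le hp1 M R).trans (ENNReal.ofReal_le_ofReal hbn))
      (hL T (by rw [hTcard]; omega))
  have hGz : ∀ z ∈ G, z.1 ∉ E₁ ∧ z.1 ∉ emptyEnds M R ∧ z.1 ∉ E₃ := by
    intro z hz
    have := hz.1.2
    simp only [Set.mem_compl_iff, Set.mem_preimage, Set.mem_union, not_or] at this
    exact ⟨this.1.1, this.1.2, this.2⟩
  have hGM : ∀ z ∈ G, (n : ℝ) + C ≤ roofSum f M z.1 := by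
    intro z hz
    have h1 := (hGz z hz).1
    simp only [E₁, Set.mem_ofPred_eq, not_le] at h1
    have h2 := (abs_lt.1 h1).1
    linarith
  set W : Finset (T → Bool) := Finset.univ.filter fun w => ∑ i, symInfo p (w i) ≤ T.card * (h + ε)
    with hW
  have hWcard := card_typical_words_le hp0 hp1 (W := W) fun w hw => (Finset.mem_filter.1 hw).2
  set key : BSeq × ℝ → (T → Bool) × ℕ := fun z => (fun j => z.1 j, ⌊z.2 * (N + 1)⌋₊) with hkey
  have hkeyS : ∀ z ∈ G, key z ∈ W ×ˢ Finset.range Nc := by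
    intro z hz
    refine Finset.mem_product.2 ⟨Finset.mem_filter.2 ⟨Finset.mem_univ _, ?_⟩,
      Finset.mem_range.2 (Nat.lt_succ_of_le (Nat.floor_le_floor ?_))⟩
    · have h3 := (hGz z hz).2.2
      simp only [E₃, Set.mem_ofPred_eq, not_le] at h3
      have h4 := (abs_lt.1 h3).2
      simp only [hkey]
      rw [Finset.sum_coe_sort T fun j => symInfo p (z.1 j)]
      linarith
    · have := hz.1.1.1.2.le.trans (hfC _)
      gcongr
  have hkeyF : ∀ z ∈ G, ∀ w ∈ G, key z = key w →
      (hammingDist (nameMap Q n z) (nameMap Q n w) : ℝ) ≤ η * n := by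
    intro z hz w hw hzw
    have hends := exists_of_notMem_emptyEnds (hGz z hz).2.1
    have hd : hammingDist (nameMap Q n z) (nameMap Q n w)
        ≤ ((Finset.range n).filter fun i : ℕ => z ∈ liftSet f Bad i).card
          + ((Finset.range n).filter fun i : ℕ => w ∈ liftSet f Bad i).card := by
      refine hammingDist_le_card_add_card fun i hiz hiw => ?_
      simp only [Finset.mem_filter, Finset.mem_range, i.2, true_and] at hiz hiw
      refine observable_eq_of_window hf0 hfC hcongr hQ hAQ hN (M := M) (n := n) (R := R)
        (by exact_mod_cast hNR) hz.1.1 (hGM z hz) i.2 (fun j h1 h2 => ?_) hends.1 hends.2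
        (abs_sub_le_of_natFloor_mul_eq hz.1.1.1.1 hw.1.1.1.1 (congrArg Prod.snd hzw)) hiz hiw
      exact congrFun (congrArg Prod.fst hzw) ⟨j, Finset.mem_Icc.2 ⟨h1, h2⟩⟩
    have h1 : ¬ η / 2 * n ≤ _ := hz.2
    have h2 : ¬ η / 2 * n ≤ _ := hw.2
    have h3 : (hammingDist (nameMap Q n z) (nameMap Q n w) : ℝ)
        ≤ ((Finset.range n).filter fun i : ℕ => z ∈ liftSet f Bad i).card
          + ((Finset.range n).filter fun i : ℕ => w ∈ liftSet f Bad i).card := by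
      exact_mod_cast hd
    linarith [not_le.1 h1, not_le.1 h2]
  set J : Finset (Fin n → Fin k) := Finset.univ.filter fun v => ∃ z ∈ G, nameMap Q n z = v with hJ
  have hJcard := card_image_le_of_fiberwise_hammingDist_le (hball n) (Real.exp_pos _).le hkeyS
    hkeyF (J := J) fun v hv => (Finset.mem_filter.1 hv).2
  have hNc0 : (1 : ℝ) ≤ Nc := by
    rw [hNc]
    push_cast
    linarith [(Nat.cast_nonneg ⌊C * ((N : ℝ) + 1)⌋₊ : (0 : ℝ) ≤ _)]
  set X := (M + 2 * R + 1) * (h + ε) + Real.log Nc + ε * n with hX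
  have hX0 : 0 ≤ X := by
    have := Real.log_nonneg hNc0
    positivity
  have hJX : (J.card : ℝ) ≤ Real.exp X := by
    refine hJcard.trans ?_
    rw [Finset.card_product, Finset.card_range, hX, Real.exp_add, Real.exp_add,
      Real.exp_log (by linarith)]
    push_cast
    gcongr
    refine hWcard.trans_eq ?_
    rw [hTcard]
    push_cast
    rfl
  have hFm : Measurable (nameMap Q n) :=
    measurable_pi_lambda _ fun i => hQm.comp (measurable_vert _)
  have hres := shannonEnt_map_le (domMeasure f m) hFm G J
    (fun z hz => Finset.mem_filter.2 ⟨Finset.mem_univ _, z, hz, rfl⟩) (by positivity) hG hX0 (by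
      rcases J.card.eq_zero_or_pos with h0 | h0
      · simpa [h0] using hX0
      · exact (Real.log_le_iff_le_exp (by exact_mod_cast h0)).2 hJX)
  refine hres.trans_eq ?_
  rw [Fintype.card_fun, Fintype.card_fin, Fintype.card_fin, Nat.cast_pow, Real.log_pow]

lemma HasBernoulliCylinders.kolSinai_le [IsProbabilityMeasure m] (hp0 : 0 < p)
    (hp1 : p < 1) (hm : HasBernoulliCylinders p m) (hf : UnifLocal f) (hf0 : ∀ u, 0 ≤ f u)
    (hc : 0 < ∫ u, f u ∂m) {C : ℝ} (hC : 0 < C) (hfC : ∀ u, f u ≤ C)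
    (hcongr : ∀ (u v : BSeq) (a b : ℤ), a ≤ 0 → 0 ≤ b → u a = true →
      u b = true → (∀ n, a ≤ n → n ≤ b → u n = v n) → f u = f v) :
    kolSinai (suspFlow shiftMap f 1) (suspMeasure shiftMap f m)
      ≤ ENNReal.ofReal
        ((-p * Real.log p - (1 - p) * Real.log (1 - p)) / ∫ u, f u ∂m) := by
  refine iSup_le fun k => iSup_le fun P => iSup_le fun hP => ?_
  rw [obsEntropy_suspFlow hP]
  obtain ⟨h, hh⟩ : ∃ h, h = -p * Real.log p - (1 - p) * Real.log (1 - p) := ⟨_, rfl⟩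
  have hhpos : 0 < h := hh ▸ bernoulliEntropy_pos hp0 hp1
  have hQm : Measurable fun z : BSeq × ℝ => P (Quot.mk (suspRel shiftMap f) z) :=
    hP.comp (measurable_suspMk _ _)
  have hQ : ∀ z : BSeq × ℝ, P (Quot.mk (suspRel shiftMap f) (suspStep f z))
      = P (Quot.mk (suspRel shiftMap f) z) := fun z =>
    congrArg P (Quot.sound (r := suspRel shiftMap f) (show suspRel shiftMap f z _ from rfl)).symm
  have key := fun ε (hε : 0 < ε) => hm.exists_eventually_shannonEnt_le hp0 hp1 hf hf0 hc hC hfC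
    hcongr hh hhpos hQm hQ (ε := ε) hε
  rw [← hh]
  obtain ⟨c, hcdef⟩ : ∃ c, c = ∫ u, f u ∂m := ⟨_, rfl⟩
  simp only [← hcdef] at key hc ⊢
  have hcont : Tendsto (fun ε : ℝ => ENNReal.ofReal
      (((1 + ε) / c + 2 * ε) * (h + ε) + ε + 2 * ε * Real.log k))
      (𝓝[>] 0) (𝓝 (ENNReal.ofReal (h / c))) := by
    refine (ENNReal.continuous_ofReal.tendsto _).comp ?_
    have : Tendsto (fun ε : ℝ => ((1 + ε) / c + 2 * ε) * (h + ε) + ε + 2 * ε * Real.log k) (𝓝 0)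
        (𝓝 (((1 + 0) / c + 2 * 0) * (h + 0) + 0 + 2 * 0 * Real.log k)) :=
      Continuous.tendsto (by fun_prop) _
    have e : ((1 + 0) / c + 2 * 0) * (h + 0) + 0 + 2 * 0 * Real.log k = h / c := by ring
    rw [e] at this
    exact this.mono_left nhdsWithin_le_nhds
  refine ge_of_tendsto hcont ?_
  filter_upwards [self_mem_nhdsWithin] with ε hε
  obtain ⟨D, hD⟩ := key ε hε
  have hε0 : 0 < ε := hε
  have ha : 0 ≤ (1 + ε) / c := by positivity
  have hlim : Tendsto (fun n : ℕ => ENNReal.ofReal ((⌊(1 + ε) / c * n⌋₊ / n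
      + 2 * (⌊ε * n⌋₊ / n) + 1 / n) * (h + ε) + D / n + ε + 2 * ε * Real.log k + 1 / n)) atTop
      (𝓝 (ENNReal.ofReal (((1 + ε) / c + 2 * ε + 0) * (h + ε) + 0 + ε + 2 * ε * Real.log k + 0))) :=
    (ENNReal.continuous_ofReal.tendsto _).comp
      (((((((tendsto_natFloor_mul_div ha).add ((tendsto_natFloor_mul_div hε0.le).const_mul _)).add
        (tendsto_const_div_atTop_nhds_zero_nat _)).mul_const _).add
        (tendsto_const_div_atTop_nhds_zero_nat _)).add_const _).add_const _ |>.add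
        (tendsto_const_div_atTop_nhds_zero_nat _))
  simp only [add_zero] at hlim
  rw [← hlim.liminf_eq]
  refine liminf_le_liminf ?_
  filter_upwards [hD, eventually_gt_atTop 0] with n hn hn0
  refine ENNReal.ofReal_le_ofReal ?_
  have hn0' : (0 : ℝ) < n := by exact_mod_cast hn0
  rw [div_le_iff₀ hn0']
  refine hn.trans_eq ?_
  generalize (⌊(1 + ε) / c * n⌋₊ : ℝ) = y
  generalize (⌊ε * n⌋₊ : ℝ) = y'
  field_simp

end UpperBound

lemma tendsto_zero_of_tendsto_natCast_mul {g : ℕ → ℝ} {l : ℝ}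
    (hg : Tendsto (fun k : ℕ => (k : ℝ) * g k) atTop (𝓝 l)) : Tendsto g atTop (𝓝 0) := by
  have h := hg.mul (tendsto_inv_atTop_nhds_zero_nat (𝕜 := ℝ))
  rw [mul_zero] at h
  refine h.congr' ?_
  filter_upwards [eventually_gt_atTop 0] with k hk
  have : (k : ℝ) ≠ 0 := by positivity
  field_simp

lemma integral_fRoof_pos {g : ℕ → ℝ} (hgpos : ∀ k, 0 < g k) {C : ℝ} (hg : ∀ k, g k ≤ C) {p : ℝ}
    (hp0 : 0 < p) (hp1 : p < 1) {m : Measure BSeq} [IsProbabilityMeasure m]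
    (hm : HasBernoulliCylinders p m) : 0 < ∫ u, fRoof g u ∂m := by
  rw [hm.integral_fRoof hp0 hp1 hgpos hg]
  have h1 : 0 ≤ ∑' k, g (k + 1) * ((1 - p) ^ 2) ^ k :=
    tsum_nonneg fun k => mul_nonneg (hgpos _).le (by positivity)
  have h2 : 0 ≤ (1 - p) * (p * (2 - p)) :=
    mul_nonneg (by linarith) (mul_nonneg hp0.le (by linarith))
  exact add_pos_of_pos_of_nonneg (mul_pos hp0 (hgpos 0)) (mul_nonneg h2 h1)

/-- for the Bernoulli measures `μ_λ` and the roof `f(u) = g(k_u)` with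
`k g(k) → l ∈ (0,∞)`, the entropy of the induced suspension-flow measure
`ν_{μ_λ} = (μ_λ × L)/∫f dμ_λ` satisfies (Abramov) `h(ν_{μ_λ}) = h(μ_λ)/∫f dμ_λ`,
and this quantity tends to `1/(2l)` as `λ → 0`. -/
theorem stmt_13 (g : ℕ → ℝ) (l : ℝ) (hl : 0 < l) (hgpos : ∀ k, 0 < g k)
    (hkg : Tendsto (fun k : ℕ => (k : ℝ) * g k) atTop (𝓝 l))
    (μ : ℝ → Measure BSeq) (hprob : ∀ p, IsProbabilityMeasure (μ p))
    (hber : ∀ p : ℝ, 0 < p → p < 1 → ∀ (s : Finset ℤ) (v : ℤ → Bool),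
      μ p {u : BSeq | ∀ n ∈ s, u n = v n}
        = ∏ n ∈ s, ENNReal.ofReal (if v n then p else 1 - p)) :
    (∀ p : ℝ, 0 < p → p < 1 →
      kolSinai (suspFlow shiftMap (fRoof g) 1) (suspMeasure shiftMap (fRoof g) (μ p))
        = ENNReal.ofReal
            ((-p * Real.log p - (1 - p) * Real.log (1 - p)) / ∫ u, fRoof g u ∂(μ p))) ∧
    Tendsto (fun p => (-p * Real.log p - (1 - p) * Real.log (1 - p)) / ∫ u, fRoof g u ∂(μ p))
      (𝓝[>] (0 : ℝ)) (𝓝 (1 / (2 * l))) := by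
  have hber' : ∀ p, 0 < p → p < 1 → HasBernoulliCylinders p (μ p) := hber
  have hg := tendsto_zero_of_tendsto_natCast_mul hkg
  obtain ⟨C, hgC⟩ := hg.bddAbove_range
  have hgC : ∀ k, g k ≤ C := fun k => hgC (Set.mem_range_self k)
  have hC : 0 < C := (hgpos 0).trans_le (hgC 0)
  have hf0 := fRoof_nonneg hgpos
  have hfC := fRoof_le hC.le hgC
  refine ⟨fun p hp0 hp1 => ?_, ?_⟩
  · have hc := integral_fRoof_pos hgpos hgC hp0 hp1 (hber' p hp0 hp1)
    refine le_antisymm ?_ ?_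
    · exact (hber' p hp0 hp1).kolSinai_le hp0 hp1 (unifLocal_fRoof hg) hf0 hc hC hfC
        fun u v a b ha hb hua hub h => fRoof_congr g ha hb hua hub h
    · exact (hber' p hp0 hp1).ofReal_le_kolSinai hp0 hp1 (unifLocal_fRoof hg) hf0 hc hC hfC
  · have h := (tendsto_bernoulliEntropy_div).div (tendsto_integral_fRoof_div
      hgpos hgC hkg hprob hber') (by positivity)
    refine h.congr' ?_
    filter_upwards [Ioo_mem_nhdsGT one_pos] with p hp
    have : -(p * Real.log p) ≠ 0 := neg_ne_zero.2
      (mul_ne_zero hp.1.ne' (Real.log_neg hp.1 hp.2).ne)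
    simp only [Pi.div_apply]
    exact div_div_div_cancel_right₀ this _ _
end

section
/- If kg(k) → 0 as k → ∞ (with g(k) > 0, Σg(k) = ∞), then the singular symbolic suspension flow over ({0,1}^ℤ, σ) with roof f(u) = g(k_u) has infinite topological entropy. -/
open MeasureTheory Filter Topology
open scoped ENNReal

/-- The Shannon entropy of a finite power of a probability vector. -/
lemma sum_negMulLog_prod {β : Type*} [Fintype β] (p : β → ℝ) (hp : ∑ b, p b = 1) (n : ℕ) :
    ∑ b : Fin n → β, Real.negMulLog (∏ i, p (b i)) = n * ∑ b, Real.negMulLog (p b) := by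
  induction n with
  | zero => simp
  | succ n ih =>
    have hprod : ∑ b : Fin n → β, ∏ i, p (b i) = 1 := by
      simp [← Fintype.prod_sum fun (_ : Fin n) b => p b, hp]
    rw [← (Fin.consEquiv fun _ => β).sum_comp, Fintype.sum_prod_type]
    simp only [Fin.consEquiv_apply, Fin.prod_univ_succ, Fin.cons_zero, Fin.cons_succ,
      Real.negMulLog_mul, Finset.sum_add_distrib]
    simp only [← Finset.sum_mul, ← Finset.mul_sum, hprod, hp, ih]
    push_cast
    ring

lemma shannonEnt_infinitePi {β : Type*} [Fintype β] [MeasurableSpace β]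
    [MeasurableSingletonClass β] (ν : Measure β) [IsProbabilityMeasure ν] (n : ℕ) :
    shannonEnt (Measure.infinitePi fun _ : Fin n => ν) = n * shannonEnt ν := by
  have hsum : ∑ b, (ν {b}).toReal = 1 := by
    rw [← ENNReal.toReal_sum fun _ _ => measure_ne_top _ _, sum_measure_singleton]
    simp
  simp only [shannonEnt, Measure.infinitePi_singleton_of_fintype, ENNReal.toReal_prod]
  exact sum_negMulLog_prod _ hsum n

lemma shiftMap_iterate (n : ℕ) (u : BSeq) (k : ℤ) : shiftMap^[n] u k = u (k + n) := by
  induction n generalizing u with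
  | zero => simp
  | succ n ih =>
    rw [Function.iterate_succ_apply, ih, shiftMap]
    push_cast
    ring_nf

/-- The i.i.d. measure on `{0,1}^ℤ` with one-coordinate law `ν`. -/
noncomputable abbrev iidMeasure (ν : Measure Bool) : Measure BSeq :=
  Measure.infinitePi fun _ : ℤ => ν

lemma iidMeasure_map_shiftMap (ν : Measure Bool) [IsProbabilityMeasure ν] :
    (iidMeasure ν).map shiftMap = iidMeasure ν :=
  Measure.map_infinitePi_infinitePi_of_inj (P := fun _ : ℤ => ν) (add_left_injective (1 : ℤ))

lemma obsEntropy_iidMeasure (ν : Measure Bool) [IsProbabilityMeasure ν] {m : ℕ}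
    (e : Bool → Fin m) :
    obsEntropy shiftMap (iidMeasure ν) (fun u => e (u 0)) =
      ENNReal.ofReal (shannonEnt (ν.map e)) := by
  have : IsProbabilityMeasure (ν.map e) :=
    Measure.isProbabilityMeasure_map (measurable_of_finite e).aemeasurable
  have hblock (n : ℕ) : (iidMeasure ν).map
      (fun u => fun i : Fin n => e (shiftMap^[(i : ℕ)] u 0)) =
        Measure.infinitePi fun _ : Fin n => ν.map e := by
    have hinj : Function.Injective fun i : Fin n => ((i : ℕ) : ℤ) :=
      Nat.cast_injective.comp Fin.val_injective
    rw [← Measure.infinitePi_map_pi (fun _ : Fin n => ν) fun _ => measurable_of_finite e,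
      ← Measure.map_infinitePi_infinitePi_of_inj (P := fun _ : ℤ => ν) hinj,
      Measure.map_map (by fun_prop) (by fun_prop)]
    simp only [shiftMap_iterate, zero_add]
    rfl
  unfold obsEntropy
  refine (liminf_congr (v := fun _ => ENNReal.ofReal (shannonEnt (ν.map e))) ?_).trans
    (liminf_const _)
  filter_upwards [eventually_ne_atTop 0] with n hn
  rw [hblock, shannonEnt_infinitePi, mul_div_cancel_left₀ _ (Nat.cast_ne_zero.2 hn)]

lemma negMulLog_le_kolSinai_iidMeasure (ν : Measure Bool) [IsProbabilityMeasure ν] :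
    ENNReal.ofReal (Real.negMulLog (ν {true}).toReal) ≤ kolSinai shiftMap (iidMeasure ν) := by
  let e : Bool → Fin 2 := fun b => if b then 1 else 0
  have he : Measurable e := measurable_of_finite e
  have : IsProbabilityMeasure (ν.map e) := Measure.isProbabilityMeasure_map he.aemeasurable
  have hmass : ν.map e {1} = ν {true} := by
    rw [Measure.map_apply he (measurableSet_singleton _)]
    congr 1
    ext b
    cases b <;> simp [e]
  calc ENNReal.ofReal (Real.negMulLog (ν {true}).toReal)
      ≤ ENNReal.ofReal (shannonEnt (ν.map e)) := by
        refine ENNReal.ofReal_le_ofReal ?_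
        rw [← hmass]
        exact Finset.single_le_sum (f := fun b => Real.negMulLog (ν.map e {b}).toReal)
          (fun _ _ => Real.negMulLog_nonneg ENNReal.toReal_nonneg measureReal_le_one)
          (Finset.mem_univ 1)
    _ = obsEntropy shiftMap (iidMeasure ν) (fun u => e (u 0)) := (obsEntropy_iidMeasure ν e).symm
    _ ≤ kolSinai shiftMap (iidMeasure ν) :=
        le_iSup₂_of_le 2 (fun u => e (u 0)) (le_iSup_of_le (he.comp (measurable_pi_apply 0)) le_rfl)

/-- The sequences whose first `1` in the direction `s` occurs at the position `s * k`. -/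
def firstOne (s : ℤ) (k : ℕ) : Set BSeq :=
  {u | u (s * k) = true ∧ ∀ j < k, u (s * j) = false}

lemma measurableSet_firstOne (s : ℤ) (k : ℕ) : MeasurableSet (firstOne s k) := by
  unfold firstOne
  measurability

lemma iidMeasure_firstOne (ν : Measure Bool) [IsProbabilityMeasure ν] {s : ℤ} (hs : s ≠ 0)
    (k : ℕ) : iidMeasure ν (firstOne s k) = ν {true} * ν {false} ^ k := by
  have hinj : Function.Injective fun j : ℕ => s * (j : ℤ) :=
    (mul_right_injective₀ hs).comp Nat.cast_injective
  have hlaw := Measure.map_infinitePi_infinitePi_of_inj (P := fun _ : ℤ => ν) hinj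
  have hset : firstOne s k = (fun (u : BSeq) (j : ℕ) => u (s * j)) ⁻¹'
      (Set.pi (Finset.range (k + 1)) fun j => {decide (j = k)}) := by
    ext u
    simp only [firstOne, Set.mem_ofPred_eq, Set.mem_preimage, Set.mem_pi, Finset.mem_coe,
      Finset.mem_range, Set.mem_singleton_iff]
    constructor
    · rintro ⟨h1, h2⟩ j hj
      rcases (Nat.lt_succ_iff.1 hj).eq_or_lt with rfl | h
      · simpa using h1
      · simpa [h.ne] using h2 j h
    · intro h
      exact ⟨by simpa using h k k.lt_succ_self,
        fun j hj => by simpa [hj.ne] using h j (hj.trans k.lt_succ_self)⟩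
  rw [hset, ← Measure.map_apply (by fun_prop)
    (MeasurableSet.pi (Finset.countable_toSet _) fun _ _ => measurableSet_singleton _), hlaw,
    Measure.infinitePi_pi _ fun _ _ => measurableSet_singleton _, Finset.prod_range_succ, mul_comm]
  congr 1
  · simp
  · rw [Finset.prod_congr rfl (g := fun _ => ν {false}) fun j hj => by
      simp [(Finset.mem_range.1 hj).ne]]
    simp

lemma mem_firstOne_kabs {u : BSeq} (hu : u ≠ zeroSeq) :
    u ∈ firstOne 1 (kabs u) ∨ u ∈ firstOne (-1) (kabs u) := by
  have hne : {m : ℕ | ∃ n : ℤ, n.natAbs = m ∧ u n = true}.Nonempty := by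
    obtain ⟨n, hn⟩ := Function.ne_iff.1 hu
    exact ⟨_, n, rfl, by simpa [zeroSeq] using hn⟩
  obtain ⟨n, hn, hun⟩ := Nat.sInf_mem hne
  have hmin (m : ℤ) (hm : m.natAbs < kabs u) : u m = false := by
    by_contra h
    exact Nat.notMem_of_lt_sInf hm ⟨m, rfl, by simpa using h⟩
  change n.natAbs = kabs u at hn
  rcases Int.natAbs_eq n with h | h
  · refine Or.inl ⟨?_, fun j hj => hmin _ (by simpa using hj)⟩
    rwa [one_mul, ← hn, ← h]
  · refine Or.inr ⟨?_, fun j hj => hmin _ (by simpa using hj)⟩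
    rwa [neg_one_mul, ← hn, ← h]

lemma ofReal_integral_fRoof_le (g : ℕ → ℝ) (hg : ∀ k, 0 ≤ g k) (ν : Measure Bool)
    [IsProbabilityMeasure ν] :
    ENNReal.ofReal (∫ u, fRoof g u ∂iidMeasure ν) ≤
      ∑' k, ENNReal.ofReal (g k) * (2 * (ν {true} * ν {false} ^ k)) := by
  set μ := iidMeasure ν
  have hnonneg (u : BSeq) : 0 ≤ fRoof g u := by
    unfold fRoof
    split_ifs
    exacts [le_rfl, hg _]
  have hpoint (u : BSeq) : ‖fRoof g u‖ₑ ≤ ∑' k, ENNReal.ofReal (g k) *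
      ((firstOne 1 k).indicator 1 u + (firstOne (-1) k).indicator 1 u) := by
    rw [Real.enorm_of_nonneg (hnonneg u)]
    by_cases hu : u = zeroSeq
    · simp [fRoof, hu]
    · refine le_trans ?_ (ENNReal.le_tsum (kabs u))
      rw [fRoof, if_neg hu]
      refine le_mul_of_one_le_right' ?_
      rcases mem_firstOne_kabs hu with h | h <;> simp [h]
  have hmeas (s : ℤ) (k : ℕ) : Measurable ((firstOne s k).indicator (1 : BSeq → ℝ≥0∞)) :=
    measurable_one.indicator (measurableSet_firstOne s k)
  have hmeas_add (k : ℕ) : Measurable fun u : BSeq =>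
      (firstOne 1 k).indicator (1 : BSeq → ℝ≥0∞) u + (firstOne (-1) k).indicator 1 u :=
    (hmeas 1 k).add (hmeas (-1) k)
  calc ENNReal.ofReal (∫ u, fRoof g u ∂μ)
      = ‖∫ u, fRoof g u ∂μ‖ₑ := (Real.enorm_of_nonneg (integral_nonneg hnonneg)).symm
    _ ≤ ∫⁻ u, ‖fRoof g u‖ₑ ∂μ := enorm_integral_le_lintegral_enorm _
    _ ≤ ∫⁻ u, ∑' k, ENNReal.ofReal (g k) *
          ((firstOne 1 k).indicator 1 u + (firstOne (-1) k).indicator 1 u) ∂μ :=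
        lintegral_mono hpoint
    _ = ∑' k, ENNReal.ofReal (g k) * (2 * (ν {true} * ν {false} ^ k)) := by
        rw [lintegral_tsum fun k => ((hmeas_add k).const_mul _).aemeasurable]
        refine tsum_congr fun k => ?_
        rw [lintegral_const_mul _ (hmeas_add k),
          lintegral_add_left (hmeas 1 k),
          lintegral_indicator_one (measurableSet_firstOne _ _),
          lintegral_indicator_one (measurableSet_firstOne _ _),
          iidMeasure_firstOne ν one_ne_zero, iidMeasure_firstOne ν (neg_ne_zero.2 one_ne_zero),
          two_mul]

/-- If `k g(k) → 0`, then `∑ g(k) x ^ k` grows more slowly than `log (1 / (1 - x))`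
as `x → 1`. -/
lemma exists_tsum_mul_pow_le (g : ℕ → ℝ) (hg : ∀ k, 0 ≤ g k)
    (hkg : Tendsto (fun k : ℕ => (k : ℝ) * g k) atTop (𝓝 0)) {ε : ℝ} (hε : 0 < ε) :
    ∃ C, 0 ≤ C ∧ ∀ x, 0 ≤ x → x < 1 →
      ∑' k, ENNReal.ofReal (g k * x ^ k) ≤ ENNReal.ofReal (C + ε * -Real.log (1 - x)) := by
  obtain ⟨K, hK⟩ := eventually_atTop.1 (hkg.eventually_lt_const hε)
  refine ⟨∑ k ∈ Finset.range (K + 1), g k, Finset.sum_nonneg fun k _ => hg k, fun x hx0 hx1 => ?_⟩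
  have hlog : HasSum (fun k : ℕ => x ^ k / (k : ℝ)) (-Real.log (1 - x)) := by
    rw [← hasSum_nat_add_iff' 1]
    simpa using Real.hasSum_pow_div_log_of_abs_lt_one (abs_lt.2 ⟨by linarith, hx1⟩)
  have hfin : HasSum (fun k => if k ∈ Finset.range (K + 1) then g k else 0)
      (∑ k ∈ Finset.range (K + 1), g k) := by
    rw [← Finset.sum_congr rfl fun k hk => if_pos hk]
    exact hasSum_sum_of_ne_finset_zero fun k hk => if_neg hk
  have hsum := hfin.add (hlog.mul_left ε)
  have hterm (k : ℕ) : g k * x ^ k ≤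
      (if k ∈ Finset.range (K + 1) then g k else 0) + ε * (x ^ k / (k : ℝ)) := by
    have h0 : 0 ≤ ε * (x ^ k / (k : ℝ)) := by positivity
    split_ifs with h
    · have := mul_le_of_le_one_right (hg k) (pow_le_one₀ hx0 hx1.le : x ^ k ≤ 1)
      linarith
    · have hk : K < k := by simpa using h
      have hk0 : (0 : ℝ) < k := by exact_mod_cast hk.pos
      rw [zero_add, ← mul_div_assoc, le_div_iff₀ hk0]
      have := mul_le_mul_of_nonneg_right (hK k hk.le).le (pow_nonneg hx0 k)
      linarith
  rw [← hsum.tsum_eq, ENNReal.ofReal_tsum_of_nonneg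
    (fun k => (mul_nonneg (hg k) (pow_nonneg hx0 k)).trans (hterm k)) hsum.summable]
  exact ENNReal.tsum_le_tsum fun k => ENNReal.ofReal_le_ofReal (hterm k)

/-- if `k g(k) → 0` (with `g > 0` and `Σ g(k) = ∞`), the singular
symbolic suspension flow over the full shift with roof `f(u) = g(k_u)` has infinite
topological entropy.  By the variational principle and Abramov's formula, its
topological entropy is `sup_{μ ≠ δ_*} h(μ)/∫ f dμ` over shift-invariant probability
measures. -/
theorem stmt_15 (g : ℕ → ℝ) (hgpos : ∀ k, 0 < g k)
    (hdiv : ∑' k : ℕ, ENNReal.ofReal (g k) = ⊤)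
    (hkg : Tendsto (fun k : ℕ => (k : ℝ) * g k) atTop (𝓝 0)) :
    ⨆ (μ : Measure BSeq) (_ : IsProbabilityMeasure μ) (_ : μ.map shiftMap = μ)
        (_ : μ ≠ Measure.dirac zeroSeq),
      kolSinai shiftMap μ / ENNReal.ofReal (∫ u, fRoof g u ∂μ) = ⊤ := by
  refine ENNReal.eq_top_of_forall_nnreal_le fun M => ?_
  have hg (k : ℕ) : 0 ≤ g k := (hgpos k).le
  obtain ⟨C, hC, hsum⟩ := exists_tsum_mul_pow_le g hg hkg
    (ε := 1 / (4 * (M + 1))) (by positivity)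
  set L : ℝ := 4 * (M + 1) * C + 1 with hL
  have hLpos : 0 < L := by positivity
  set p : ℝ := Real.exp (-L) with hp
  have hp0 : 0 < p := Real.exp_pos _
  have hp1 : p < 1 := Real.exp_lt_one_iff.2 (by linarith)
  set ν := ProbabilityTheory.bernoulliMeasure true false ⟨p, hp0.le, hp1.le⟩
  have htrue : ν {true} = ENNReal.ofReal p := by
    rw [← ofReal_measureReal,
      ProbabilityTheory.bernoulliMeasure_real_apply_of_mem_of_notMem _ (by measurability)
        (by simp) (by simp)]
  have hfalse : ν {false} = ENNReal.ofReal (1 - p) := by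
    rw [← ofReal_measureReal,
      ProbabilityTheory.bernoulliMeasure_real_apply_of_notMem_of_mem _ (by measurability)
        (by simp) (by simp)]
  have hne : iidMeasure ν ≠ Measure.dirac zeroSeq := by
    intro h
    have h1 := iidMeasure_firstOne ν one_ne_zero 0
    rw [h, Measure.dirac_apply' _ (measurableSet_firstOne 1 0), htrue] at h1
    simp [firstOne, zeroSeq, hp0.not_ge] at h1
  refine le_iSup₂_of_le (iidMeasure ν) inferInstance <|
    le_iSup₂_of_le (iidMeasure_map_shiftMap ν) hne ?_
  have hent : ENNReal.ofReal (p * L) ≤ kolSinai shiftMap (iidMeasure ν) := by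
    have h := negMulLog_le_kolSinai_iidMeasure ν
    rwa [htrue, ENNReal.toReal_ofReal hp0.le, Real.negMulLog, hp, Real.log_exp, ← hp,
      neg_mul_neg] at h
  have hint : ENNReal.ofReal (∫ u, fRoof g u ∂iidMeasure ν) ≤
      ENNReal.ofReal (2 * p * (C + 1 / (4 * (M + 1)) * L)) := by
    refine (ofReal_integral_fRoof_le g hg ν).trans ?_
    have hx := hsum (1 - p) (by linarith) (by linarith)
    rw [sub_sub_cancel, hp, Real.log_exp, neg_neg, ← hp] at hx
    rw [ENNReal.ofReal_mul (by positivity)]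
    refine le_trans (le_of_eq ?_) (mul_le_mul_right hx _)
    rw [← ENNReal.tsum_mul_left]
    refine tsum_congr fun k => ?_
    rw [htrue, hfalse, ENNReal.ofReal_mul (hg k), ENNReal.ofReal_pow (by linarith),
      ENNReal.ofReal_mul zero_le_two, ENNReal.ofReal_ofNat]
    ring
  have hent0 : kolSinai shiftMap (iidMeasure ν) ≠ 0 :=
    ((ENNReal.ofReal_pos.2 (mul_pos hp0 hLpos)).trans_le hent).ne'
  rw [ENNReal.le_div_iff_mul_le (Or.inr hent0) (Or.inl ENNReal.ofReal_ne_top)]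
  refine (mul_le_mul_right hint _).trans (le_trans ?_ hent)
  rw [← ENNReal.ofReal_coe_nnreal, ← ENNReal.ofReal_mul M.coe_nonneg]
  refine ENNReal.ofReal_le_ofReal ?_
  have hM : (0 : ℝ) ≤ M := M.coe_nonneg
  have hbound : (M + 1 : ℝ) * (2 * (C + 1 / (4 * (M + 1)) * L)) ≤ L := by
    have : (M + 1 : ℝ) * (2 * (C + 1 / (4 * (M + 1)) * L)) = 2 * (M + 1) * C + L / 2 := by
      field_simp
      ring
    linarith
  calc (M : ℝ) * (2 * p * (C + 1 / (4 * (M + 1)) * L))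
      ≤ (M + 1) * (2 * p * (C + 1 / (4 * (M + 1)) * L)) := by
        gcongr
        linarith
    _ = p * ((M + 1) * (2 * (C + 1 / (4 * (M + 1)) * L))) := by ring
    _ ≤ p * L := by gcongr
end
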